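/- Fix d ≥ 3, positive definite Σ with unit diagonal and smallest eigenvalue σ_*² > 0, φ > 0, ε ∈ (0,1], an integer v ≥ 1, and K > 0; set η := K/√(log d). For a rectangle A define ρ^{A,φ,ε,Σ}(w) := E[m^{A,φ}(w + εZ)] with Z ∼ N(0,Σ) and m^{A,φ} the φ-Lipschitz smoothed indicator of A. Then sup over rectangles A and w ∈ ℝ^d of Σ_{j_1,…,j_v=1}^d sup_{‖y‖_∞ ≤ ε σ_* η} |∂_{j_1…j_v} ρ^{A,φ,ε,Σ}(w + y)| is at most C φ (log d)^{(v−1)/2} / (ε σ_*)^{v−1}, where C depends only on v and K. -/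

import Mathlib

open MeasureTheory ProbabilityTheory

/-- The piecewise-linear smoothing function g^φ. -/
noncomputable def gphi (φ t : ℝ) : ℝ :=
  if t ≤ 0 then 1 else if t < 1 / φ then 1 - φ * t else 0

/-- The φ-Lipschitz smoothed indicator of the rectangle ∏ (a_j, b_j]. -/
noncomputable def mrect (d : ℕ) (a b : Fin d → ℝ) (φ : ℝ) (w : Fin d → ℝ) : ℝ :=
  gphi φ (⨆ j, max (w j - b j) (a j - w j))

/-- ρ^{A,φ,ε,Σ}(w) = E[m^{A,φ}(w + εZ)], Z ∼ N(0,Σ) with law γ. -/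
noncomputable def rhoFn (d : ℕ) (a b : Fin d → ℝ) (φ ε : ℝ)
    (γ : Measure (Fin d → ℝ)) (w : Fin d → ℝ) : ℝ :=
  ∫ z, mrect d a b φ (w + ε • z) ∂γ


lemma contDiff_iter_param {Ω E : Type*} [NormedAddCommGroup Ω] [NormedSpace ℝ Ω]
    [NormedAddCommGroup E] [NormedSpace ℝ E] (F : Ω → E → ℝ)
    (hF : ContDiff ℝ (⊤ : ℕ∞) (fun p : Ω × E => F p.1 p.2)) (k : ℕ) :
    ContDiff ℝ (⊤ : ℕ∞) (fun p : Ω × E => iteratedFDeriv ℝ k (F p.1) p.2) := by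
  induction k with
  | zero =>
    simp only [iteratedFDeriv_zero_eq_comp]
    exact (LinearIsometryEquiv.contDiff _).comp hF
  | succ k ih =>
    simp only [iteratedFDeriv_succ_eq_comp_left, Function.comp_apply]
    let e : (E →L[ℝ] ContinuousMultilinearMap ℝ (fun _ : Fin k => E) ℝ) ≃ₗᵢ[ℝ] ContinuousMultilinearMap ℝ (fun _ : Fin (k+1) => E) ℝ := (continuousMultilinearCurryLeftEquiv ℝ (fun _ : Fin (k + 1) => E) ℝ).symm
    refine (LinearIsometryEquiv.contDiff (𝕜 := ℝ) (E := E →L[ℝ] ContinuousMultilinearMap ℝ (fun _ : Fin k => E) ℝ) (F := ContinuousMultilinearMap ℝ (fun _ : Fin (k+1) => E) ℝ) e).comp (f := fun p : Ω × E => fderiv ℝ (iteratedFDeriv ℝ k (F p.1)) p.2) ?_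
    refine ContDiff.fderiv (m := (⊤ : ℕ∞)) (n := (⊤ : ℕ∞)) (f := fun p : Ω × E => fun y => iteratedFDeriv ℝ k (F p.1) y) (g := fun p : Ω × E => p.2) ?_ contDiff_snd (by simp)
    exact ih.comp ((contDiff_fst.comp contDiff_fst).prodMk contDiff_snd)

lemma iter_integral {Ω E : Type*} [NormedAddCommGroup Ω] [NormedSpace ℝ Ω]
    [MeasurableSpace Ω] [BorelSpace Ω] [SecondCountableTopology Ω]
    [NormedAddCommGroup E] [NormedSpace ℝ E] [FiniteDimensional ℝ E]
    (μ : Measure Ω) [IsFiniteMeasure μ] (F : Ω → E → ℝ)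
    (hF : ContDiff ℝ (⊤ : ℕ∞) (fun p : Ω × E => F p.1 p.2))
    (hb : ∀ k : ℕ, ∃ C : ℝ, ∀ᵐ ω ∂μ, ∀ x, ‖iteratedFDeriv ℝ k (F ω) x‖ ≤ C) (k : ℕ) :
    iteratedFDeriv ℝ k (fun x => ∫ ω, F ω x ∂μ) = fun x => ∫ ω, iteratedFDeriv ℝ k (F ω) x ∂μ := by
  have hc : ∀ (k : ℕ) (x : E), Continuous (fun ω => iteratedFDeriv ℝ k (F ω) x) := fun k x =>
    (contDiff_iter_param F hF k).continuous.comp (continuous_id.prodMk continuous_const)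
  have hm : ∀ (k : ℕ) (x : E), AEStronglyMeasurable (fun ω => iteratedFDeriv ℝ k (F ω) x) μ :=
    fun k x => (hc k x).aestronglyMeasurable
  have hd : ∀ ω, ContDiff ℝ (⊤ : ℕ∞) (F ω) := fun ω =>
    hF.comp (contDiff_const.prodMk contDiff_id)
  have hIntg : ∀ (k : ℕ) (x : E), Integrable (fun ω => iteratedFDeriv ℝ k (F ω) x) μ := by
    intro k x
    obtain ⟨C, hC⟩ := hb k
    exact (integrable_const C).mono' (hm k x) (hC.mono fun ω h => h x)
  induction k with
  | zero =>
    simp only [iteratedFDeriv_zero_eq_comp]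
    funext x
    simp only [Function.comp_apply]
    exact ((continuousMultilinearCurryFin0 ℝ E ℝ).symm.toLinearIsometry.integral_comp_comm (fun ω => F ω x)).symm
  | succ k ih =>
    rw [iteratedFDeriv_succ_eq_comp_left, ih]
    funext x
    simp only [Function.comp_apply]
    obtain ⟨C, hC⟩ := hb (k+1)
    have key := hasFDerivAt_integral_of_dominated_of_fderiv_le (𝕜 := ℝ) (μ := μ) (s := Set.univ) (x₀ := x)
      (F := fun x ω => iteratedFDeriv ℝ k (F ω) x)
      (F' := fun x ω => fderiv ℝ (iteratedFDeriv ℝ k (F ω)) x) (bound := fun _ => C)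
      Filter.univ_mem (Filter.Eventually.of_forall fun y => hm k y) (hIntg k x) ?_ ?_ (integrable_const C) ?_
    · rw [key.fderiv]
      let e : (E →L[ℝ] ContinuousMultilinearMap ℝ (fun _ : Fin k => E) ℝ) ≃ₗᵢ[ℝ] ContinuousMultilinearMap ℝ (fun _ : Fin (k+1) => E) ℝ := (continuousMultilinearCurryLeftEquiv ℝ (fun _ : Fin (k + 1) => E) ℝ).symm
      exact (LinearIsometry.integral_comp_comm (𝕜 := ℝ) (E := E →L[ℝ] ContinuousMultilinearMap ℝ (fun _ : Fin k => E) ℝ) (F := ContinuousMultilinearMap ℝ (fun _ : Fin (k+1) => E) ℝ) e.toLinearIsometry (fun ω : Ω => fderiv ℝ (iteratedFDeriv ℝ k (F ω)) x)).symm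
    · have : (fun ω => fderiv ℝ (iteratedFDeriv ℝ k (F ω)) x) = fun ω =>
        (continuousMultilinearCurryLeftEquiv ℝ (fun _ : Fin (k + 1) => E) ℝ) (iteratedFDeriv ℝ (k+1) (F ω) x) := by
        funext ω
        rw [iteratedFDeriv_succ_eq_comp_left]
        simp
      rw [this]
      exact (LinearIsometryEquiv.continuous _).comp_aestronglyMeasurable (hm (k+1) x)
    · filter_upwards [hC] with ω h y _
      rw [norm_fderiv_iteratedFDeriv]; exact h y
    · refine Filter.Eventually.of_forall fun ω y _ => ?_
      exact ((hd ω).differentiable_iteratedFDeriv (by exact_mod_cast WithTop.coe_lt_top _) y).hasFDerivAt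

lemma norm_multilin_le {d k : ℕ} (f : ContinuousMultilinearMap ℝ (fun _ : Fin k => (Fin d → ℝ)) ℝ) :
    ‖f‖ ≤ ∑ J : Fin k → Fin d, |f (fun i => Pi.single (J i) 1)| := by
  refine f.opNorm_le_bound (Finset.sum_nonneg fun _ _ => abs_nonneg _) fun m => ?_
  have h1 : f m = ∑ J : Fin k → Fin d, f (fun i => m i (J i) • (Pi.single (J i) 1 : Fin d → ℝ)) := by
    have := f.toMultilinearMap.map_sum (fun (i : Fin k) (j : Fin d) => m i j • (Pi.single j 1 : Fin d → ℝ))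
    simp only [ContinuousMultilinearMap.coe_coe] at this
    rw [← this]
    congr 1
    funext i
    simpa using pi_eq_sum_univ' (m i)
  rw [h1, Finset.sum_mul]
  refine (norm_sum_le _ _).trans (Finset.sum_le_sum fun J _ => ?_)
  rw [f.map_smul_univ, norm_smul, mul_comm, Real.norm_eq_abs]
  refine mul_le_mul_of_nonneg_left ?_ (abs_nonneg _)
  rw [norm_prod]
  exact Finset.prod_le_prod (fun _ _ => norm_nonneg _) fun i _ => norm_le_pi_norm (m i) (J i)

lemma iter_prod {d : ℕ} (u : Fin d → ℝ → ℝ) (hu : ∀ j, ContDiff ℝ (⊤ : ℕ∞) (u j)) (k : ℕ)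
    (J : Fin k → Fin d) (x : Fin d → ℝ) :
    iteratedFDeriv ℝ k (fun x : Fin d → ℝ => ∏ j, u j (x j)) x (fun i => Pi.single (J i) 1)
      = ∏ j, iteratedDeriv (Finset.univ.filter (fun i => J i = j)).card (u j) (x j) := by
  have hF : ContDiff ℝ (⊤ : ℕ∞) (fun x : Fin d → ℝ => ∏ j, u j (x j)) := 
    contDiff_prod fun j _ => (hu j).comp (contDiff_apply ℝ ℝ j)
  induction k generalizing x with
  | zero => simp
  | succ k ih =>
    rw [iteratedFDeriv_succ_apply_left]
    have hdiff : DifferentiableAt ℝ (iteratedFDeriv ℝ k (fun x : Fin d → ℝ => ∏ j, u j (x j))) x :=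
      (hF.differentiable_iteratedFDeriv (by exact_mod_cast WithTop.coe_lt_top _) x)
    set T : Fin k → Fin d := fun i => J i.succ with hT
    have e1 : (fderiv ℝ (iteratedFDeriv ℝ k (fun x : Fin d → ℝ => ∏ j, u j (x j))) x) (Pi.single (J 0) 1) (fun i => Pi.single (T i) 1)
       = fderiv ℝ (fun y => iteratedFDeriv ℝ k (fun x : Fin d → ℝ => ∏ j, u j (x j)) y (fun i => Pi.single (T i) 1)) x (Pi.single (J 0) 1) := by
      have := (ContinuousMultilinearMap.apply ℝ (fun _ : Fin k => (Fin d → ℝ)) ℝ (fun i => Pi.single (T i) 1)).hasFDerivAt.comp x hdiff.hasFDerivAt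
      have h2 := this.fderiv
      simp only [Function.comp_def, ContinuousMultilinearMap.apply_apply] at h2
      rw [h2]; rfl
    have e2 : Fin.tail (fun i => (Pi.single (J i) 1 : Fin d → ℝ)) = fun i => Pi.single (T i) 1 := rfl
    rw [e2, e1]
    simp_rw [ih T]
    have hcard : ∀ j, (Finset.univ.filter (fun i => J i = j)).card = (Finset.univ.filter (fun i => T i = j)).card + if j = J 0 then 1 else 0 := by
      intro j
      rw [Finset.card_filter, Finset.card_filter, Fin.sum_univ_succ, add_comm]
      simp [hT, eq_comm]
    set n : Fin d → ℕ := fun j => (Finset.univ.filter (fun i => T i = j)).card with hn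
    have hsm : ∀ j (m : ℕ) (y : ℝ), HasDerivAt (iteratedDeriv m (u j)) (iteratedDeriv (m+1) (u j) y) y := by
      intro j m y
      rw [iteratedDeriv_succ]
      exact (((hu j).differentiable_iteratedDeriv m (by exact_mod_cast WithTop.coe_lt_top _)) y).hasDerivAt
    have hp : HasFDerivAt (fun y : Fin d → ℝ => ∏ j, iteratedDeriv (n j) (u j) (y j))
       (∑ i, (∏ j ∈ Finset.univ.erase i, iteratedDeriv (n j) (u j) (x j)) • (iteratedDeriv (n i + 1) (u i) (x i) • (ContinuousLinearMap.proj i : (Fin d → ℝ) →L[ℝ] ℝ))) x := by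
      refine HasFDerivAt.finsetProd fun i _ => ?_
      exact (hsm i (n i) (x i)).comp_hasFDerivAt x (ContinuousLinearMap.proj (R := ℝ) (φ := fun _ : Fin d => ℝ) i).hasFDerivAt
    rw [hp.fderiv, sum_apply]
    rw [Finset.sum_eq_single (J 0)]
    · rw [← Finset.mul_prod_erase Finset.univ (fun j => iteratedDeriv (Finset.univ.filter (fun i => J i = j)).card (u j) (x j)) (Finset.mem_univ (J 0))]
      simp only [hcard, if_true]
      simp only [smul_apply, ContinuousLinearMap.proj_apply, Pi.single_eq_same, smul_eq_mul, mul_one]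
      rw [mul_comm]
      congr 1
      refine Finset.prod_congr rfl fun j hj => ?_
      rw [if_neg (Finset.ne_of_mem_erase hj)]; rfl
    · intro i _ hi
      simp [hi]
    · simp


/-- the standard normal density -/
noncomputable def phiN (x : ℝ) : ℝ := (√(2 * Real.pi))⁻¹ * Real.exp (-(x ^ 2 / 2))
/-- the standard normal cdf -/
noncomputable def PhiN (x : ℝ) : ℝ := (gaussianReal 0 1).real (Set.Iic x)

lemma phiN_eq : gaussianPDFReal 0 1 = phiN := by
  funext x
  simp [gaussianPDFReal_def, phiN]
  left
  ring

lemma phiN_cont : Continuous phiN := by unfold phiN; fun_prop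

lemma phiN_pos (x : ℝ) : 0 < phiN x := by unfold phiN; positivity

lemma phiN_int : Integrable phiN := by rw [← phiN_eq]; exact integrable_gaussianPDFReal 0 1

lemma PhiN_eq (x : ℝ) : PhiN x = ∫ t in Set.Iic x, phiN t := by
  unfold PhiN
  rw [measureReal_def, gaussianReal_apply_eq_integral 0 one_ne_zero, phiN_eq, ENNReal.toReal_ofReal]
  exact setIntegral_nonneg measurableSet_Iic fun t _ => (phiN_pos t).le

lemma PhiN_nonneg (x : ℝ) : 0 ≤ PhiN x := measureReal_nonneg
lemma PhiN_le_one (x : ℝ) : PhiN x ≤ 1 := measureReal_le_one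
lemma PhiN_mono : Monotone PhiN := fun _ _ h => measureReal_mono (Set.Iic_subset_Iic.2 h)

lemma PhiN_deriv (x : ℝ) : HasDerivAt PhiN (phiN x) x := by
  have h : PhiN = fun y => PhiN 0 + ∫ t in (0:ℝ)..y, phiN t := by
    funext y
    rw [PhiN_eq, PhiN_eq, ← intervalIntegral.integral_Iic_sub_Iic phiN_int.integrableOn phiN_int.integrableOn]
    ring
  rw [h]
  exact (intervalIntegral.integral_hasDerivAt_right (phiN_cont.intervalIntegrable _ _)
    (phiN_cont.stronglyMeasurableAtFilter _ _) phiN_cont.continuousAt).const_add _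

lemma PhiN_neg (x : ℝ) : PhiN (-x) = 1 - PhiN x := by
  have h1 : (gaussianReal 0 1).map (fun x => -x) = gaussianReal 0 1 := by
    simpa using gaussianReal_map_neg (μ := 0) (v := 1)
  have : NullSingletonClass (gaussianReal 0 1) := nullSingletonClass_gaussianReal one_ne_zero
  have h2 : PhiN (-x) = (gaussianReal 0 1).real (Set.Ici x) := by
    unfold PhiN
    conv_lhs => rw [← h1]
    rw [map_measureReal_apply (by fun_prop) measurableSet_Iic]
    congr 1
    ext y; simp
  have h3 : (gaussianReal 0 1).real (Set.Ici x) = (gaussianReal 0 1).real (Set.Iic x)ᶜ := by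
    rw [Set.compl_Iic]
    exact (measureReal_congr Ioi_ae_eq_Ici).symm
  rw [h2, h3, probReal_compl_eq_one_sub measurableSet_Iic]; rfl

lemma gauss_Icc (a b : ℝ) (h : a ≤ b) :
    (gaussianReal 0 1).real (Set.Icc a b) = PhiN b + PhiN (-a) - 1 := by
  have : NullSingletonClass (gaussianReal 0 1) := nullSingletonClass_gaussianReal one_ne_zero
  have h1 : (gaussianReal 0 1).real (Set.Icc a b) = (gaussianReal 0 1).real (Set.Ioc a b) :=
    (measureReal_congr Ioc_ae_eq_Icc).symm
  have h2 : Set.Ioc a b = Set.Iic b \ Set.Iic a := by ext y; simp [and_comm]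
  rw [h1, h2, measureReal_sdiff (Set.Iic_subset_Iic.2 h) measurableSet_Iic, PhiN_neg]
  unfold PhiN; ring

lemma PhiN_contDiff : ContDiff ℝ (⊤ : ℕ∞) PhiN := by
  rw [contDiff_infty_iff_deriv]
  refine ⟨fun x => (PhiN_deriv x).differentiableAt, ?_⟩
  have : deriv PhiN = phiN := funext fun x => (PhiN_deriv x).deriv
  rw [this]
  unfold phiN
  fun_prop

lemma poly_growth (p : Polynomial ℤ) : ∃ C : ℝ, 0 ≤ C ∧ ∀ x : ℝ, |Polynomial.aeval x p| ≤ C * (1 + |x|) ^ p.natDegree := by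
  refine ⟨∑ i ∈ Finset.range (p.natDegree + 1), |(p.coeff i : ℝ)|, Finset.sum_nonneg fun _ _ => abs_nonneg _, fun x => ?_⟩
  rw [Polynomial.aeval_eq_sum_range, Finset.sum_mul]
  refine (Finset.abs_sum_le_sum_abs _ _).trans (Finset.sum_le_sum fun i hi => ?_)
  rw [zsmul_eq_mul, abs_mul, abs_pow]
  refine mul_le_mul_of_nonneg_left ?_ (abs_nonneg _)
  calc |x| ^ i ≤ (1 + |x|) ^ i := pow_le_pow_left₀ (abs_nonneg _) (by linarith) _
    _ ≤ _ := pow_le_pow_right₀ (by linarith [abs_nonneg x]) (by simpa [Nat.lt_succ_iff] using hi)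

lemma PhiN_iter (m : ℕ) : ∃ C : ℝ, 0 ≤ C ∧ ∀ x : ℝ,
    |iteratedDeriv (m+1) PhiN x| ≤ C * (1 + |x|) ^ m * Real.exp (-(x^2/2)) := by
  obtain ⟨C, hC, h⟩ := poly_growth (Polynomial.hermite m)
  rw [Polynomial.natDegree_hermite] at h
  refine ⟨|(√(2 * Real.pi))⁻¹| * C, by positivity, fun x => ?_⟩
  have hd : deriv PhiN = fun x => (√(2 * Real.pi))⁻¹ * Real.exp (-(x ^ 2 / 2)) := funext fun x => (PhiN_deriv x).deriv
  rw [iteratedDeriv_succ', hd, iteratedDeriv_const_mul_field, iteratedDeriv_eq_iterate,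
    Polynomial.deriv_gaussian_eq_hermite_mul_gaussian, abs_mul, abs_mul, abs_mul, abs_pow, abs_neg, abs_one, one_pow, one_mul,
    Real.abs_exp, mul_assoc, mul_assoc]
  refine mul_le_mul_of_nonneg_left ?_ (abs_nonneg _)
  rw [← mul_assoc]
  exact mul_le_mul_of_nonneg_right (h x) (Real.exp_pos _).le


/-- mixture density majorant -/
noncomputable def gg (K L x : ℝ) : ℝ :=
  (1 - Real.exp (-L^2)) * phiN (x + K / L) + Real.exp (-L^2) * (L * (Real.sigmoid (L * x) * (1 - Real.sigmoid (L * x))))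
/-- mixture cdf majorant -/
noncomputable def GG (K L x : ℝ) : ℝ :=
  (1 - Real.exp (-L^2)) * PhiN (x + K / L) + Real.exp (-L^2) * Real.sigmoid (L * x)

lemma q_lt {L : ℝ} (hL : 1 ≤ L) : Real.exp (-L^2) ≤ 1/2 := by
  have h1 : Real.exp (-L^2) ≤ Real.exp (-1) := Real.exp_le_exp.2 (by nlinarith)
  have h2 : Real.exp (-1) ≤ 1/2 := by
    rw [Real.exp_neg]
    have := Real.add_one_le_exp (1:ℝ)
    rw [inv_le_comm₀ (Real.exp_pos _) (by norm_num)]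
    linarith
  linarith

lemma gg_nonneg {K L : ℝ} (hL : 1 ≤ L) (x : ℝ) : 0 ≤ gg K L x := by
  have := q_lt hL
  have h1 := Real.sigmoid_nonneg (L * x)
  have h2 := Real.sigmoid_le_one (L * x)
  have h3 := (phiN_pos (x + K/L)).le
  unfold gg
  refine add_nonneg (mul_nonneg (by linarith) h3) ?_
  refine mul_nonneg (Real.exp_pos _).le (mul_nonneg (by linarith) (mul_nonneg h1 (by linarith)))

lemma GG_deriv (K L x : ℝ) : HasDerivAt (GG K L) (gg K L x) x := by
  unfold GG gg
  have h1 : HasDerivAt (fun x => PhiN (x + K / L)) (phiN (x + K/L)) x :=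
    (PhiN_deriv (x + K/L)).comp_add_const x (K/L)
  have h2 : HasDerivAt (fun x => Real.sigmoid (L * x)) (L * (Real.sigmoid (L * x) * (1 - Real.sigmoid (L * x)))) x := by
    have := (Real.hasDerivAt_sigmoid (L*x)).comp x ((hasDerivAt_id x).const_mul L)
    refine this.congr_deriv ?_
    ring
  exact (h1.const_mul _).add (h2.const_mul _)

lemma GG_mem {K L : ℝ} (hL : 1 ≤ L) (x : ℝ) : 0 ≤ GG K L x ∧ GG K L x ≤ 1 := by
  have := q_lt hL
  have h0 := Real.exp_pos (-L^2)
  have h1 := Real.sigmoid_nonneg (L * x)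
  have h2 := Real.sigmoid_le_one (L * x)
  have h3 := PhiN_nonneg (x + K/L)
  have h4 := PhiN_le_one (x + K/L)
  unfold GG
  constructor
  · exact add_nonneg (mul_nonneg (by linarith) h3) (mul_nonneg h0.le h1)
  · nlinarith

lemma one_sub_sigmoid_ge (y : ℝ) : Real.exp (-|y|) ≤ 2 * (1 - Real.sigmoid y) := by
  rw [← Real.sigmoid_neg, Real.sigmoid_def, neg_neg, ← div_eq_mul_inv, le_div_iff₀ (by positivity), mul_add, mul_one, ← Real.exp_add]
  have h1 : Real.exp (-|y|) ≤ 1 := by rw [Real.exp_le_one_iff]; linarith [abs_nonneg y]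
  have h2 : Real.exp (-|y| + y) ≤ 1 := by rw [Real.exp_le_one_iff]; linarith [le_abs_self y]
  linarith

lemma sigmoid_ge (y : ℝ) : Real.exp (-|y|) ≤ 2 * Real.sigmoid y := by
  have := one_sub_sigmoid_ge (-y)
  rw [Real.sigmoid_neg, abs_neg] at this
  linarith

lemma sigmoid_dens_ge (y : ℝ) : Real.exp (-|y|) ≤ 4 * (Real.sigmoid y * (1 - Real.sigmoid y)) := by
  have h1 := one_sub_sigmoid_ge y
  have h2 := sigmoid_ge y
  have h3 := Real.sigmoid_nonneg y
  have h4 := Real.sigmoid_le_one y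
  nlinarith

lemma tail_est {K L β x : ℝ} (hK : 0 < K) (hL : 1 ≤ L) (hβ : 8 * L < |β|) (hx : |x - β| ≤ K / L) :
    Real.exp (-(x^2/4)) ≤ Real.exp (K^2) * (Real.exp (-L^2) * Real.exp (-|L * β|)) := by
  rw [← Real.exp_add, ← Real.exp_add, Real.exp_le_exp, abs_mul, abs_of_pos (by linarith : 0 < L)]
  have h1 : |x - β| ≤ K := hx.trans (div_le_self hK.le hL)
  have h2 : (x - β)^2 ≤ K^2 := by rw [← sq_abs]; exact pow_le_pow_left₀ (abs_nonneg _) h1 2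
  have h3 : β^2 ≤ 3/2 * x^2 + 3 * K^2 := by nlinarith [sq_nonneg (x - 2 * (β - x))]
  have h4 : L^2 ≤ β^2/64 := by rw [← sq_abs β]; nlinarith
  have h5 : L * |β| ≤ β^2/8 := by rw [← sq_abs β]; nlinarith [abs_nonneg β]
  nlinarith [sq_nonneg K, sq_nonneg x]

lemma core_est {K L β x : ℝ} (hK : 0 < K) (hL : 1 ≤ L) (hβ : |β| ≤ 8 * L) (hx : |x - β| ≤ K / L) :
    Real.exp (-(x^2/2)) ≤ Real.exp (16 * K + 2 * K^2) * Real.exp (-((β + K / L)^2/2)) := by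
  rw [← Real.exp_add, Real.exp_le_exp]
  set η := K / L with hη
  have h0 : 0 < η := by positivity
  have h1 : η ≤ K := div_le_self hK.le hL
  have hLη : L * η = K := by rw [hη]; field_simp
  rw [abs_le] at hx hβ
  have hx' : x = β + (x - β) := by ring
  have h2 : |(β + η - x) * (β + η + x)| ≤ (2 * η) * (16 * L + 2 * η) := by
    rw [abs_mul]
    refine mul_le_mul ?_ ?_ (abs_nonneg _) (by positivity)
    · rw [abs_le]; constructor <;> linarith
    · rw [abs_le]; constructor <;> linarith
  have h3 := (abs_le.1 h2).2
  nlinarith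

lemma pow_exp_bound (m : ℕ) (x : ℝ) : (1 + |x|)^m * Real.exp (-(x^2/4)) ≤ m.factorial * Real.exp 2 := by
  have h1 := Real.pow_div_factorial_le_exp (x := 1 + |x|) (by positivity) m
  rw [div_le_iff₀ (by positivity)] at h1
  calc (1 + |x|)^m * Real.exp (-(x^2/4)) ≤ (Real.exp (1 + |x|) * m.factorial) * Real.exp (-(x^2/4)) := by gcongr
    _ = m.factorial * Real.exp (1 + |x| + -(x^2/4)) := by rw [Real.exp_add (1 + |x|)]; ring
    _ ≤ _ := by
      gcongr
      rw [← sq_abs]; nlinarith [sq_nonneg (|x|/2 - 1)]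

lemma est_a1 (K : ℝ) (hK : 0 < K) (m : ℕ) : ∃ κ : ℝ, 0 ≤ κ ∧ ∀ L : ℝ, 1 ≤ L → ∀ β x : ℝ,
    |x - β| ≤ K / L → |iteratedDeriv (m+1) PhiN x| ≤ κ * L^m * gg K L β := by
  obtain ⟨C, hC, h⟩ := PhiN_iter m
  set A : ℝ := C * (9 + K)^m * Real.exp (16 * K + 2 * K^2) * √(2 * Real.pi) * 2 with hA
  set B : ℝ := C * (m.factorial * Real.exp 2) * Real.exp (K^2) * 4 with hB
  have hA0 : 0 ≤ A := by positivity
  have hB0 : 0 ≤ B := by positivity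
  refine ⟨A + B, by positivity, fun L hL β x hx => ?_⟩
  have hL0 : 0 < L := by linarith
  have hq := q_lt hL
  have hLm : 1 ≤ L^m := one_le_pow₀ hL
  have hg := gg_nonneg (K := K) hL β
  have hsig : 0 ≤ Real.sigmoid (L * β) * (1 - Real.sigmoid (L * β)) := mul_nonneg (Real.sigmoid_nonneg _) (by linarith [Real.sigmoid_le_one (L * β)])
  refine (h x).trans ?_
  by_cases hβ : |β| ≤ 8 * L
  · have h1 := core_est hK hL hβ hx
    have h2 : 1 + |x| ≤ (9 + K) * L := by
      have e1 : |x| ≤ |x - β| + |β| := by simpa using abs_add_le (x - β) β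
      have e2 : K / L ≤ K := div_le_self hK.le hL
      nlinarith
    have h3 : (1/2) * phiN (β + K/L) ≤ gg K L β := by
      unfold gg
      have : (1/2) * phiN (β + K/L) ≤ (1 - Real.exp (-L^2)) * phiN (β + K/L) :=
        mul_le_mul_of_nonneg_right (by linarith) (phiN_pos _).le
      have h0 : 0 ≤ Real.exp (-L^2) * (L * (Real.sigmoid (L * β) * (1 - Real.sigmoid (L * β)))) := by positivity
      linarith
    have h4 : Real.exp (-((β + K / L)^2/2)) = √(2 * Real.pi) * phiN (β + K/L) := by
      unfold phiN
      rw [← mul_assoc, mul_inv_cancel₀ (by positivity), one_mul]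
    calc C * (1 + |x|)^m * Real.exp (-(x^2/2)) 
        ≤ C * ((9 + K) * L)^m * (Real.exp (16 * K + 2 * K^2) * Real.exp (-((β + K / L)^2/2))) := by gcongr
      _ = A * L^m * ((1/2) * phiN (β + K/L)) := by rw [h4, mul_pow, hA]; ring
      _ ≤ A * L^m * gg K L β := by gcongr
      _ ≤ (A + B) * L^m * gg K L β := by gcongr; linarith
  · push Not at hβ
    have h1 := tail_est hK hL hβ hx
    have h2 := sigmoid_dens_ge (L * β)
    have h3 : Real.exp (-L^2) * (Real.sigmoid (L * β) * (1 - Real.sigmoid (L * β))) ≤ gg K L β := by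
      unfold gg
      have e1 : 0 ≤ (1 - Real.exp (-L^2)) * phiN (β + K/L) := mul_nonneg (by linarith) (phiN_pos _).le
      have e2 : Real.exp (-L^2) * (Real.sigmoid (L * β) * (1 - Real.sigmoid (L * β))) ≤ Real.exp (-L^2) * (L * (Real.sigmoid (L * β) * (1 - Real.sigmoid (L * β)))) := by
        refine mul_le_mul_of_nonneg_left ?_ (Real.exp_pos _).le
        exact le_mul_of_one_le_left hsig hL
      linarith
    have h4 : Real.exp (-(x^2/2)) = Real.exp (-(x^2/4)) * Real.exp (-(x^2/4)) := by
      rw [← Real.exp_add]; congr 1; ring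
    calc C * (1 + |x|)^m * Real.exp (-(x^2/2)) 
        = C * ((1 + |x|)^m * Real.exp (-(x^2/4))) * Real.exp (-(x^2/4)) := by rw [h4]; ring
      _ ≤ C * (m.factorial * Real.exp 2) * (Real.exp (K^2) * (Real.exp (-L^2) * (4 * (Real.sigmoid (L * β) * (1 - Real.sigmoid (L * β)))))) := by
        refine mul_le_mul (mul_le_mul_of_nonneg_left (pow_exp_bound m x) hC) (h1.trans ?_) (Real.exp_pos _).le (by positivity)
        gcongr
      _ = B * (Real.exp (-L^2) * (Real.sigmoid (L * β) * (1 - Real.sigmoid (L * β)))) := by rw [hB]; ring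
      _ ≤ B * gg K L β := by gcongr
      _ ≤ (A + B) * L^m * gg K L β := by
        refine mul_le_mul_of_nonneg_right ?_ hg
        nlinarith

lemma mills {K L x : ℝ} (hK : 0 < K) (hL : 1 ≤ L) (hx : x ≤ (8 + K) * L) :
    phiN x ≤ Real.exp (9 + K) * L * (1 - PhiN x) := by
  have hL0 : 0 < L := by linarith
  have hlt : x < x + 1 / L := by have : 0 < 1 / L := by positivity
                                 linarith
  obtain ⟨c, hc, hc2⟩ := exists_hasDerivAt_eq_slope PhiN phiN hlt
    (fun y _ => (PhiN_deriv y).continuousAt.continuousWithinAt) (fun y _ => PhiN_deriv y)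
  have h1 : phiN c = L * (PhiN (x + 1/L) - PhiN x) := by rw [hc2]; field_simp; ring
  have h2 : phiN c ≤ L * (1 - PhiN x) := by
    rw [h1]
    exact mul_le_mul_of_nonneg_left (by linarith [PhiN_le_one (x + 1/L)]) hL0.le
  have h3 : phiN x ≤ Real.exp (9 + K) * phiN c := by
    unfold phiN
    rw [mul_left_comm, ← Real.exp_add]
    refine mul_le_mul_of_nonneg_left (Real.exp_le_exp.2 ?_) (by positivity)
    set t := c - x with ht
    have ht0 : 0 ≤ t := by linarith [hc.1]
    have ht1 : L * t ≤ 1 := by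
      have : t ≤ 1 / L := by linarith [hc.2]
      calc L * t ≤ L * (1/L) := by gcongr
        _ = 1 := by field_simp
    have hc' : c = x + t := by linarith
    rw [hc']
    have e1 : x * t ≤ 8 + K := by nlinarith
    have e2 : t ≤ 1 := by nlinarith
    nlinarith
  calc phiN x ≤ Real.exp (9 + K) * phiN c := h3
    _ ≤ Real.exp (9 + K) * (L * (1 - PhiN x)) := by gcongr
    _ = _ := by ring

lemma est_b (K : ℝ) (hK : 0 < K) : ∃ κ : ℝ, 0 ≤ κ ∧ ∀ L : ℝ, 1 ≤ L → ∀ β : ℝ,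
    gg K L β ≤ κ * L * (1 - GG K L β) := by
  refine ⟨Real.exp (9 + K) + 2 * Real.exp (K^2) + 1, by positivity, fun L hL β => ?_⟩
  have hL0 : 0 < L := by linarith
  have hq := q_lt hL
  have h1 : 1 - GG K L β = (1 - Real.exp (-L^2)) * (1 - PhiN (β + K/L)) + Real.exp (-L^2) * (1 - Real.sigmoid (L * β)) := by
    unfold GG; ring
  have hP : 0 ≤ 1 - PhiN (β + K/L) := by linarith [PhiN_le_one (β + K/L)]
  have hS : 0 ≤ 1 - Real.sigmoid (L * β) := by linarith [Real.sigmoid_le_one (L * β)]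
  have hq0 := Real.exp_pos (-L^2)
  set q := Real.exp (-L^2)
  have hq1 : 0 ≤ 1 - q := by linarith
  have h2 : q * (L * (Real.sigmoid (L * β) * (1 - Real.sigmoid (L * β)))) ≤ L * (q * (1 - Real.sigmoid (L * β))) := by
    have : Real.sigmoid (L * β) * (1 - Real.sigmoid (L * β)) ≤ 1 - Real.sigmoid (L * β) := by
      nlinarith [Real.sigmoid_le_one (L * β)]
    calc _ ≤ q * (L * (1 - Real.sigmoid (L * β))) := by gcongr
      _ = _ := by ring
  have h3 : (1 - q) * phiN (β + K/L) ≤ Real.exp (9 + K) * L * ((1 - q) * (1 - PhiN (β + K/L))) + 2 * Real.exp (K^2) * L * (q * (1 - Real.sigmoid (L * β))) := by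
    by_cases hβ : |β| ≤ 8 * L
    · have hx : β + K / L ≤ (8 + K) * L := by
        have e2 : K / L ≤ K := div_le_self hK.le hL
        nlinarith [le_abs_self β]
      have := mills hK hL hx
      have e1 : (1 - q) * phiN (β + K/L) ≤ (1 - q) * (Real.exp (9 + K) * L * (1 - PhiN (β + K/L))) := by gcongr
      have e2 : 0 ≤ 2 * Real.exp (K^2) * L * (q * (1 - Real.sigmoid (L * β))) := by positivity
      linarith
    · push Not at hβ
      have e0 := tail_est (x := β + K/L) hK hL hβ (by rw [add_sub_cancel_left, abs_of_pos (by positivity)])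
      have e1 : phiN (β + K/L) ≤ Real.exp (-((β + K/L)^2/4)) := by
        unfold phiN
        have : (√(2 * Real.pi))⁻¹ ≤ 1 := by
          apply inv_le_one_of_one_le₀
          rw [Real.one_le_sqrt]
          linarith [Real.pi_gt_three]
        calc _ ≤ 1 * Real.exp (-((β + K/L)^2/4)) := by
              gcongr ?_ * Real.exp ?_
              nlinarith [sq_nonneg (β + K/L)]
          _ = _ := one_mul _
      have e2 := one_sub_sigmoid_ge (L * β)
      have e3 : 0 ≤ Real.exp (9 + K) * L * ((1 - q) * (1 - PhiN (β + K/L))) := by positivity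
      have e4 : (1 - q) * phiN (β + K/L) ≤ phiN (β + K/L) := mul_le_of_le_one_left (phiN_pos _).le (by linarith)
      have e5 : Real.exp (K^2) * (q * Real.exp (-|L * β|)) ≤ Real.exp (K^2) * (q * (2 * (1 - Real.sigmoid (L * β)))) := by gcongr
      have e6 : Real.exp (K^2) * (q * (2 * (1 - Real.sigmoid (L * β)))) ≤ 2 * Real.exp (K^2) * L * (q * (1 - Real.sigmoid (L * β))) := by
        have : 0 ≤ 2 * Real.exp (K^2) * (q * (1 - Real.sigmoid (L * β))) := by positivity
        nlinarith
      linarith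
  rw [h1]
  unfold gg
  have p1 : 0 ≤ L * ((1 - q) * (1 - PhiN (β + K/L))) := by positivity
  have p2 : 0 ≤ L * (q * (1 - Real.sigmoid (L * β))) := by positivity
  have p3 := Real.exp_pos (9 + K)
  have p4 := Real.exp_pos (K^2)
  change (1 - q) * phiN (β + K/L) + q * (L * (Real.sigmoid (L * β) * (1 - Real.sigmoid (L * β)))) ≤ _
  nlinarith [mul_nonneg p3.le p2, mul_nonneg p4.le p1]

lemma est_main (v : ℕ) (K : ℝ) (hK : 0 < K) : ∃ κ : ℝ, 1 ≤ κ ∧ ∀ L : ℝ, 1 ≤ L → ∀ β : ℝ,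
    gg K L β ≤ κ * L * (1 - GG K L β) ∧
    ∀ m < v, ∀ x : ℝ, |x - β| ≤ K / L → |iteratedDeriv (m+1) PhiN x| ≤ κ * L^m * gg K L β := by
  obtain ⟨κ0, h0, hb⟩ := est_b K hK
  choose κ hκ ha using est_a1 K hK
  have hs : 0 ≤ ∑ m ∈ Finset.range v, κ m := Finset.sum_nonneg fun m _ => hκ m
  refine ⟨1 + κ0 + ∑ m ∈ Finset.range v, κ m, by linarith, fun L hL β => ⟨?_, fun m hm x hx => ?_⟩⟩
  · refine (hb L hL β).trans ?_
    have := (GG_mem (K := K) hL β).2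
    refine mul_le_mul_of_nonneg_right (mul_le_mul_of_nonneg_right (by linarith) (by linarith)) (by linarith)
  · refine (ha m L hL β x hx).trans ?_
    have : κ m ≤ ∑ m ∈ Finset.range v, κ m := Finset.single_le_sum (f := κ) (fun m _ => hκ m) (Finset.mem_range.2 hm)
    refine mul_le_mul_of_nonneg_right (mul_le_mul_of_nonneg_right (by linarith) (by positivity)) (gg_nonneg hL β)


lemma comb_count {d n : ℕ} (f : Fin d → ℝ) (hf : ∀ j, 0 ≤ f j) (X Y : Fin d → ℝ)
    (hX : ∀ j, 0 ≤ X j) (hY : ∀ j, 0 ≤ Y j) :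
    ∑ J : Fin (n+1) → Fin d, f (J 0) * ∏ j ∈ Finset.univ.erase (J 0),
      (if j ∈ Finset.univ.image J then X j else Y j)
    ≤ ((n:ℝ)+1)^(n+1) * ∑ j, f j * ∏ k ∈ Finset.univ.erase j, (X k + Y k) := by
  classical
  let g : (Fin (n+1) → Fin d) → (Σ _ : Fin d, Finset (Fin d)) :=
    fun J => ⟨J 0, (Finset.univ.image J).erase (J 0)⟩
  let h : (Σ _ : Fin d, Finset (Fin d)) → ℝ := fun y =>
    f y.1 * ((∏ k ∈ y.2, X k) * ∏ k ∈ (Finset.univ.erase y.1) \ y.2, Y k)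
  have hh : ∀ y, 0 ≤ h y := fun y => mul_nonneg (hf _) (mul_nonneg (Finset.prod_nonneg fun _ _ => hX _) (Finset.prod_nonneg fun _ _ => hY _))
  have e1 : ∀ J : Fin (n+1) → Fin d, f (J 0) * ∏ j ∈ Finset.univ.erase (J 0),
      (if j ∈ Finset.univ.image J then X j else Y j) = h (g J) := by
    intro J
    simp only [h, g]
    congr 1
    rw [← Finset.prod_sdiff (s₁ := (Finset.univ.image J).erase (J 0)) (s₂ := Finset.univ.erase (J 0))
      (Finset.erase_subset_erase _ (Finset.subset_univ _)), mul_comm]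
    congr 1
    · refine Finset.prod_congr rfl fun j hj => ?_
      rw [if_pos (Finset.mem_of_mem_erase hj)]
    · refine Finset.prod_congr rfl fun j hj => ?_
      rw [if_neg]
      intro hj2
      simp only [Finset.mem_sdiff, Finset.mem_erase] at hj
      exact hj.2 ⟨hj.1.1, hj2⟩
  let Tgt : Finset (Σ _ : Fin d, Finset (Fin d)) := Finset.univ.sigma fun j => (Finset.univ.erase j).powerset
  have e2 : ∑ j, f j * ∏ k ∈ Finset.univ.erase j, (X k + Y k) = ∑ y ∈ Tgt, h y := by
    rw [Finset.sum_sigma]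
    refine Finset.sum_congr rfl fun j _ => ?_
    rw [Finset.prod_add, Finset.mul_sum]
  have hmaps : ∀ J ∈ (Finset.univ : Finset (Fin (n+1) → Fin d)), g J ∈ Tgt := by
    intro J _
    simp only [Tgt, g, Finset.mem_sigma, Finset.mem_univ, true_and, Finset.mem_powerset]
    exact Finset.erase_subset_erase _ (Finset.subset_univ _)
  rw [Finset.sum_congr rfl fun J _ => e1 J, e2, ← Finset.sum_fiberwise_of_maps_to hmaps, Finset.mul_sum]
  refine Finset.sum_le_sum fun y hy => ?_
  rw [Finset.sum_congr rfl (g := fun _ => h y) (fun J hJ => by rw [(Finset.mem_filter.1 hJ).2]), Finset.sum_const, nsmul_eq_mul]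
  refine mul_le_mul_of_nonneg_right ?_ (hh y)
  rcases (Finset.univ.filter fun J => g J = y).eq_empty_or_nonempty with he | ⟨J0, hJ0⟩
  · rw [he]; simp; positivity
  · have hsub : (Finset.univ.filter fun J => g J = y) ⊆ Fintype.piFinset (fun _ : Fin (n+1) => Finset.univ.image J0) := by
      intro J hJ
      have h1 : g J = g J0 := by rw [(Finset.mem_filter.1 hJ).2, (Finset.mem_filter.1 hJ0).2]
      simp only [g, Sigma.mk.injEq, heq_eq_eq] at h1
      have h2 : Finset.univ.image J = Finset.univ.image J0 := by
        rw [← Finset.insert_erase (Finset.mem_image_of_mem J (Finset.mem_univ 0)), h1.2, h1.1,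
          Finset.insert_erase (Finset.mem_image_of_mem J0 (Finset.mem_univ 0))]
      rw [Fintype.mem_piFinset]
      intro i
      rw [← h2]
      exact Finset.mem_image_of_mem J (Finset.mem_univ i)
    have hc := Finset.card_le_card hsub
    rw [Fintype.card_piFinset_const] at hc
    have hc2 : (Finset.univ.image J0).card ≤ n + 1 := by
      simpa using Finset.card_image_le (s := (Finset.univ : Finset (Fin (n+1)))) (f := J0)
    have := hc.trans (Nat.pow_le_pow_left hc2 (n+1))
    exact_mod_cast this

lemma comb {d n : ℕ} (P f : Fin d → ℝ) (κ L : ℝ) (hκ : 1 ≤ κ) (hL : 1 ≤ L)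
    (hP0 : ∀ j, 0 ≤ P j) (hP1 : ∀ j, P j ≤ 1) (hf0 : ∀ j, 0 ≤ f j) (hf : ∀ j, f j ≤ κ * L * (1 - P j)) :
    ∑ J : Fin (n+1) → Fin d, ∏ j, (if (Finset.univ.filter (fun i => J i = j)).card = 0 then P j
        else L ^ ((Finset.univ.filter (fun i => J i = j)).card - 1) * f j)
    ≤ (2 * κ * L)^n * (((n:ℝ)+1)^(n+1) * ∑ j, f j * ∏ k ∈ Finset.univ.erase j, ((1 + P k) / 2)) := by
  classical
  have hA : 1 ≤ 2 * κ * L := by nlinarith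
  have hLA : L ≤ 2 * κ * L := by nlinarith
  have hc := comb_count (n := n) f hf0 (fun j => (1 - P j)/2) P (fun j => by linarith [hP1 j]) hP0
  have e : ∀ k, (1 - P k)/2 + P k = (1 + P k)/2 := fun k => by ring
  simp only [e] at hc
  refine le_trans ?_ (mul_le_mul_of_nonneg_left hc (by positivity))
  rw [Finset.mul_sum]
  refine Finset.sum_le_sum fun J _ => ?_
  set m : Fin d → ℕ := fun j => (Finset.univ.filter (fun i => J i = j)).card with hm
  have hmem : ∀ j, j ∈ Finset.univ.image J ↔ m j ≠ 0 := by
    intro j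
    simp only [hm, Finset.card_ne_zero, Finset.mem_image, Finset.filter_nonempty_iff, Finset.mem_univ, true_and]
  have hsum : ∑ j, m j = n + 1 := by
    have := Finset.card_eq_sum_card_fiberwise (f := J) (s := Finset.univ) (t := Finset.univ) (fun _ _ => Finset.mem_coe.2 (Finset.mem_univ _))
    rw [Finset.card_univ, Fintype.card_fin] at this
    exact this.symm
  have hm0 : m (J 0) ≠ 0 := (hmem _).1 (Finset.mem_image_of_mem J (Finset.mem_univ 0))
  rw [← Finset.mul_prod_erase Finset.univ _ (Finset.mem_univ (J 0)), if_neg hm0]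
  have hs2 : (m (J 0) - 1) + ∑ j ∈ Finset.univ.erase (J 0), m j = n := by
    have := Finset.add_sum_erase Finset.univ m (Finset.mem_univ (J 0))
    omega
  have hprod : ∏ j ∈ Finset.univ.erase (J 0), (if m j = 0 then P j else L ^ (m j - 1) * f j)
      ≤ ∏ j ∈ Finset.univ.erase (J 0), ((2 * κ * L)^(m j) * (if j ∈ Finset.univ.image J then (1 - P j)/2 else P j)) := by
    refine Finset.prod_le_prod (fun j _ => ?_) fun j _ => ?_
    · split_ifs
      · exact hP0 j
      · exact mul_nonneg (by positivity) (hf0 j)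
    · by_cases h0 : m j = 0
      · rw [if_pos h0, if_neg (by rw [hmem]; simp [h0]), h0]; simp
      · rw [if_neg h0, if_pos ((hmem j).2 h0)]
        obtain ⟨c, hc⟩ := Nat.exists_eq_succ_of_ne_zero h0
        rw [hc, Nat.succ_eq_add_one, Nat.add_sub_cancel, pow_succ]
        have h1 : L^c ≤ (2 * κ * L)^c := pow_le_pow_left₀ (by linarith) hLA c
        calc L^c * f j ≤ (2 * κ * L)^c * (κ * L * (1 - P j)) := mul_le_mul h1 (hf j) (hf0 j) (by positivity)
          _ = _ := by ring
  have hL1 : L ^ (m (J 0) - 1) ≤ (2 * κ * L) ^ (m (J 0) - 1) := pow_le_pow_left₀ (by linarith) hLA _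
  have hX : ∀ j, 0 ≤ (if j ∈ Finset.univ.image J then (1 - P j)/2 else P j) := by
    intro j
    split_ifs
    · linarith [hP1 j]
    · exact hP0 j
  calc _ ≤ ((2 * κ * L) ^ (m (J 0) - 1) * f (J 0)) * ∏ j ∈ Finset.univ.erase (J 0), ((2 * κ * L)^(m j) * (if j ∈ Finset.univ.image J then (1 - P j)/2 else P j)) := by
        refine mul_le_mul (mul_le_mul_of_nonneg_right hL1 (hf0 _)) hprod ?_ (mul_nonneg (by positivity) (hf0 _))
        refine Finset.prod_nonneg fun j _ => ?_
        split_ifs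
        · exact hP0 j
        · exact mul_nonneg (by positivity) (hf0 j)
    _ = _ := by
        rw [Finset.prod_mul_distrib, Finset.prod_pow_eq_pow_sum]
        have hpow : (2*κ*L)^n = (2*κ*L)^(m (J 0) - 1) * (2*κ*L)^(∑ j ∈ Finset.univ.erase (J 0), m j) := by
          rw [← pow_add, hs2]
        rw [hpow]; ring

lemma gg_cont (K L : ℝ) : Continuous (gg K L) := by
  unfold gg
  have h1 := phiN_cont
  have h2 : Continuous Real.sigmoid := continuous_sigmoid
  fun_prop

lemma GG_cont (K L : ℝ) : Continuous (GG K L) :=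
  continuous_iff_continuousAt.2 fun x => (GG_deriv K L x).continuousAt

/-- telescoping integrand -/
noncomputable def tel {d : ℕ} (K L s : ℝ) (A B : Fin d → ℝ) (t : ℝ) : ℝ :=
  ∑ j, (gg K L (B j + t / s) + gg K L (A j + t / s)) *
    ∏ k ∈ Finset.univ.erase j, ((1 + (GG K L (B k + t / s) + GG K L (A k + t / s) - 1)) / 2)

lemma tel_cont {d : ℕ} (K L s : ℝ) (A B : Fin d → ℝ) : Continuous (tel K L s A B) := by
  unfold tel
  have h1 := gg_cont K L
  have h2 := GG_cont K L
  fun_prop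

lemma tel_nonneg {d : ℕ} {K L s : ℝ} (hL : 1 ≤ L) (A B : Fin d → ℝ) (t : ℝ) : 0 ≤ tel K L s A B t := by
  refine Finset.sum_nonneg fun j _ => mul_nonneg (add_nonneg (gg_nonneg hL _) (gg_nonneg hL _)) ?_
  refine Finset.prod_nonneg fun k _ => ?_
  linarith [(GG_mem (K := K) hL (B k + t/s)).1, (GG_mem (K := K) hL (A k + t/s)).1]

lemma tel_int {d : ℕ} {K L s T : ℝ} (hL : 1 ≤ L) (hs : 0 < s) (A B : Fin d → ℝ) :
    ∫ t in (0:ℝ)..T, tel K L s A B t ≤ 2 * s := by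
  set Ψ : ℝ → ℝ := fun t => 2 * s * ∏ j, ((1 + (GG K L (B j + t / s) + GG K L (A j + t / s) - 1)) / 2) with hΨ
  have hd : ∀ t, HasDerivAt Ψ (tel K L s A B t) t := by
    intro t
    have h1 : ∀ (c : ℝ), HasDerivAt (fun t => GG K L (c + t / s)) (gg K L (c + t/s) * (1/s)) t := by
      intro c
      have := (GG_deriv K L (c + t/s)).comp t (((hasDerivAt_id t).div_const s).const_add c)
      simpa [Function.comp_def] using this
    have h2 : ∀ j ∈ (Finset.univ : Finset (Fin d)), HasDerivAt (fun t => (1 + (GG K L (B j + t / s) + GG K L (A j + t / s) - 1)) / 2)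
        ((gg K L (B j + t/s) * (1/s) + gg K L (A j + t/s) * (1/s)) / 2) t := fun j _ =>
      ((((h1 (B j)).add (h1 (A j))).sub_const 1).const_add 1).div_const 2
    have h3 := (HasDerivAt.fun_finsetProd h2).const_mul (2 * s)
    refine h3.congr_deriv ?_
    unfold tel
    rw [Finset.mul_sum]
    refine Finset.sum_congr rfl fun j _ => ?_
    simp only [smul_eq_mul]
    field_simp
  rw [intervalIntegral.integral_eq_sub_of_hasDerivAt (fun t _ => hd t) ((tel_cont K L s A B).intervalIntegrable _ _)]
  have hR : ∀ t j, 0 ≤ (1 + (GG K L (B j + t / s) + GG K L (A j + t / s) - 1)) / 2 ∧ (1 + (GG K L (B j + t / s) + GG K L (A j + t / s) - 1)) / 2 ≤ 1 := by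
    intro t k
    have h1 := GG_mem (K := K) hL (B k + t/s)
    have h2 := GG_mem (K := K) hL (A k + t/s)
    constructor <;> linarith [h1.1, h1.2, h2.1, h2.2]
  have h1 : Ψ T ≤ 2 * s := by
    simp only [hΨ]
    exact mul_le_of_le_one_right (by positivity) (Finset.prod_le_one (fun j _ => (hR T j).1) (fun j _ => (hR T j).2))
  have h2 : 0 ≤ Ψ 0 := mul_nonneg (by positivity) (Finset.prod_nonneg fun j _ => (hR 0 j).1)
  linarith


lemma charFunDual_std (l : StrongDual ℝ ℝ) :
    charFunDual (gaussianReal 0 1) l = Complex.exp (((-(l 1)^2/2 : ℝ) : ℂ)) := by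
  have h := charFun_gaussianReal (μ := 0) (v := 1) (l 1)
  rw [charFun_apply_real] at h
  rw [charFunDual_apply]
  have e : ∀ x : ℝ, l x = l 1 * x := by
    intro x
    have := l.map_smul x 1
    simp only [smul_eq_mul, mul_one] at this
    rw [this, mul_comm]
  have e2 : ∀ x : ℝ, ((l x : ℝ) : ℂ) = ((l 1 : ℝ) : ℂ) * (x : ℂ) := fun x => by rw [e x]; push_cast; rfl
  rw [show (fun v : ℝ => Complex.exp ((l v : ℂ) * Complex.I)) = fun x : ℝ => Complex.exp ((l 1 : ℂ) * (x:ℂ) * Complex.I) from funext fun x => by rw [e2 x]]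
  refine h.trans ?_
  congr 1
  push_cast
  ring

lemma gauss_second_moment {d : ℕ} (S : Fin d → Fin d → ℝ) (γ : Measure (Fin d → ℝ)) [IsProbabilityMeasure γ]
    (hγ : ∀ l : (Fin d → ℝ) →ₗ[ℝ] ℝ, ∃ vr : NNReal, γ.map l = gaussianReal 0 vr)
    (hS : ∀ j k, ∫ z, z j * z k ∂γ = S j k) (l : StrongDual ℝ (Fin d → ℝ)) :
    γ.map l = gaussianReal 0 (∑ j, ∑ k, l (Pi.single j 1) * S j k * l (Pi.single k 1)).toNNReal := by
  have hcoord : ∀ j, MemLp (fun z : Fin d → ℝ => z j) 2 γ := by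
    intro j
    obtain ⟨vr, h⟩ := hγ (LinearMap.proj j)
    have h2 : MemLp id ((2 : NNReal) : ENNReal) (gaussianReal 0 vr) := memLp_id_gaussianReal 2
    rw [← h, memLp_map_measure_iff aestronglyMeasurable_id] at h2
    · exact_mod_cast h2
    · exact (measurable_pi_apply j).aemeasurable
  obtain ⟨vr, h⟩ := hγ l.toLinearMap
  replace h : γ.map (l : (Fin d → ℝ) → ℝ) = gaussianReal 0 vr := h
  have hm : Measurable (l : (Fin d → ℝ) → ℝ) := l.continuous.measurable
  have hv := variance_id_gaussianReal (μ := 0) (v := vr)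
  rw [variance_of_integral_eq_zero aemeasurable_id (by simp)] at hv
  rw [← h, integral_map hm.aemeasurable (by fun_prop)] at hv
  have hl : ∀ z : Fin d → ℝ, l z = ∑ j, z j * l (Pi.single j 1) := by
    intro z
    conv_lhs => rw [pi_eq_sum_univ' z]
    rw [map_sum]
    refine Finset.sum_congr rfl fun j _ => ?_
    rw [map_smul, smul_eq_mul]
  have hIntg : ∀ j k, Integrable (fun z : Fin d → ℝ => z j * z k) γ := fun j k => (hcoord j).integrable_mul (hcoord k)
  have e : ∫ z, (l z)^2 ∂γ = ∑ j, ∑ k, l (Pi.single j 1) * S j k * l (Pi.single k 1) := by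
    have e1 : ∀ z : Fin d → ℝ, (l z)^2 = ∑ j, ∑ k, (l (Pi.single j 1) * l (Pi.single k 1)) * (z j * z k) := by
      intro z
      rw [hl z, sq, Finset.sum_mul_sum]
      refine Finset.sum_congr rfl fun j _ => Finset.sum_congr rfl fun k _ => by ring
    simp_rw [e1]
    rw [integral_finsetSum _ fun j _ => integrable_finsetSum _ fun k _ => (hIntg j k).const_mul _]
    refine Finset.sum_congr rfl fun j _ => ?_
    rw [integral_finsetSum _ fun k _ => (hIntg j k).const_mul _]
    refine Finset.sum_congr rfl fun k _ => ?_
    rw [integral_const_mul, hS]; ring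
  have hvr : (∑ j, ∑ k, l (Pi.single j 1) * S j k * l (Pi.single k 1)).toNNReal = vr := by
    rw [← e]
    have : ∫ z, (l z)^2 ∂γ = vr := hv
    rw [this, Real.toNNReal_coe]
  rw [hvr]; exact h

lemma psd_factor {d : ℕ} (S : Fin d → Fin d → ℝ) (hsym : ∀ j k, S j k = S k j) (σs : ℝ)
    (h : ∀ x : Fin d → ℝ, (∑ j, (x j) ^ 2) = 1 → σs^2 ≤ ∑ j, ∑ k, x j * S j k * x k) :
    ∃ (m : ℕ) (V : Fin m → Fin d → ℝ), ∀ x : Fin d → ℝ,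
      ∑ j, ∑ k, x j * S j k * x k = ∑ i, (∑ j, x j * V i j)^2 + σs^2 * ∑ j, (x j)^2 := by
  have hgen : ∀ x : Fin d → ℝ, σs^2 * ∑ j, (x j)^2 ≤ ∑ j, ∑ k, x j * S j k * x k := by
    intro x
    rcases (Finset.sum_nonneg (s := Finset.univ) fun j _ => sq_nonneg (x j)).eq_or_lt with h0 | h0
    · have : ∀ j, x j = 0 := by
        intro j
        have := (Finset.sum_eq_zero_iff_of_nonneg fun j _ => sq_nonneg (x j)).1 h0.symm j (Finset.mem_univ j)
        exact pow_eq_zero_iff (two_ne_zero) |>.1 this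
      simp [this]
    · set N := ∑ j, (x j)^2 with hN
      have h1 := h (fun j => x j / √N) (by
        simp_rw [div_pow, Real.sq_sqrt h0.le]
        rw [← Finset.sum_div, ← hN, div_self h0.ne'])
      have h2 : ∑ j, ∑ k, (x j / √N) * S j k * (x k / √N) = (∑ j, ∑ k, x j * S j k * x k) / N := by
        rw [Finset.sum_div]
        refine Finset.sum_congr rfl fun j _ => ?_
        rw [Finset.sum_div]
        refine Finset.sum_congr rfl fun k _ => ?_
        conv_rhs => rw [← Real.mul_self_sqrt h0.le]
        have : √N ≠ 0 := (Real.sqrt_pos.2 h0).ne'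
        field_simp
      rw [h2, le_div_iff₀ h0] at h1
      exact h1
  let M : Matrix (Fin d) (Fin d) ℝ := Matrix.of S - σs^2 • (1 : Matrix (Fin d) (Fin d) ℝ)
  have hq : ∀ x : Fin d → ℝ, x ⬝ᵥ M.mulVec x = ∑ j, ∑ k, x j * S j k * x k - σs^2 * ∑ j, (x j)^2 := by
    intro x
    simp only [M, Matrix.sub_mulVec, dotProduct_sub, Matrix.smul_mulVec, Matrix.one_mulVec, dotProduct_smul, smul_eq_mul]
    congr 1
    · simp only [dotProduct, Matrix.mulVec, Matrix.of_apply, Finset.mul_sum, mul_assoc]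
    · simp only [dotProduct, sq]
  have hM : M.PosSemidef := by
    rw [Matrix.posSemidef_iff_dotProduct_mulVec]
    refine ⟨?_, fun x => ?_⟩
    · ext j k
      simp only [M, Matrix.conjTranspose_apply, Matrix.sub_apply, Matrix.of_apply, Matrix.smul_apply, star_trivial, Matrix.one_apply, hsym k j, eq_comm]
    · rw [star_trivial, hq]; linarith [hgen x]
  obtain ⟨m, V, hV⟩ := Matrix.posSemidef_iff_eq_sum_vecMulVec.1 hM
  refine ⟨m, V, fun x => ?_⟩
  have := hq x
  rw [hV] at this
  have e : x ⬝ᵥ (∑ i, Matrix.vecMulVec (V i) (star (V i))).mulVec x = ∑ i, (∑ j, x j * V i j)^2 := by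
    rw [Matrix.sum_mulVec, dotProduct_sum]
    refine Finset.sum_congr rfl fun i _ => ?_
    simp only [star_trivial, Matrix.vecMulVec_mulVec, dotProduct_smul]
    simp [dotProduct, sq, mul_comm]
  linarith

lemma decomp {d : ℕ} (S : Fin d → Fin d → ℝ) (σs : ℝ)
    (h : ∀ x : Fin d → ℝ, (∑ j, (x j) ^ 2) = 1 → σs^2 ≤ ∑ j, ∑ k, x j * S j k * x k)
    (γ : Measure (Fin d → ℝ)) [IsProbabilityMeasure γ]
    (hγ : ∀ l : (Fin d → ℝ) →ₗ[ℝ] ℝ, ∃ vr : NNReal, γ.map l = gaussianReal 0 vr)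
    (hS : ∀ j k, ∫ z, z j * z k ∂γ = S j k) :
    ∃ (m : ℕ) (V : Fin m → Fin d → ℝ), γ = ((Measure.pi fun _ : Fin m => gaussianReal 0 1).prod
      (Measure.pi fun _ : Fin d => gaussianReal 0 1)).map (fun p => (∑ i, p.1 i • V i) + σs • p.2) := by
  obtain ⟨m, V, hV⟩ := psd_factor S (fun j k => by rw [← hS, ← hS]; simp_rw [mul_comm]) σs h
  refine ⟨m, V, ?_⟩
  let T : ((Fin m → ℝ) × (Fin d → ℝ)) →L[ℝ] (Fin d → ℝ) :=
    (∑ i, (ContinuousLinearMap.smulRight ((ContinuousLinearMap.proj i).comp (ContinuousLinearMap.fst ℝ (Fin m → ℝ) (Fin d → ℝ))) (V i)))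
      + σs • ContinuousLinearMap.snd ℝ (Fin m → ℝ) (Fin d → ℝ)
  have hT : (fun p : (Fin m → ℝ) × (Fin d → ℝ) => (∑ i, p.1 i • V i) + σs • p.2) = T := by
    funext p
    simp [T]
  rw [hT]
  have : IsProbabilityMeasure (((Measure.pi fun _ : Fin m => gaussianReal 0 1).prod
      (Measure.pi fun _ : Fin d => gaussianReal 0 1)).map T) := Measure.isProbabilityMeasure_map T.continuous.aemeasurable
  refine Measure.ext_of_charFunDual ?_
  funext l
  rw [charFunDual_map, charFunDual_prod, charFunDual_pi, charFunDual_pi, charFunDual_eq_charFun_map_one,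
    gauss_second_moment S γ hγ hS l, charFun_gaussianReal]
  simp_rw [charFunDual_std]
  rw [← Complex.exp_sum, ← Complex.exp_sum, ← Complex.exp_add]
  have hx := hV (fun j => l (Pi.single j 1))
  have hl : ∀ z : Fin d → ℝ, l z = ∑ j, l (Pi.single j 1) * z j := by
    intro z
    conv_lhs => rw [pi_eq_sum_univ' z]
    rw [map_sum]
    refine Finset.sum_congr rfl fun j _ => ?_
    rw [map_smul, smul_eq_mul, mul_comm]
  have e1 : ∀ i, ((l ∘SL T) ∘SL ContinuousLinearMap.inl ℝ (Fin m → ℝ) (Fin d → ℝ) ∘SL ContinuousLinearMap.single ℝ (fun _ => ℝ) i) 1 = ∑ j, l (Pi.single j 1) * V i j := by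
    intro i
    rw [← hl]
    simp [← hT, Pi.single_apply, ite_smul]
  have e2 : ∀ j, ((l ∘SL T) ∘SL ContinuousLinearMap.inr ℝ (Fin m → ℝ) (Fin d → ℝ) ∘SL ContinuousLinearMap.single ℝ (fun _ => ℝ) j) 1 = σs * l (Pi.single j 1) := by
    intro i
    simp [← hT]
  have hnn : 0 ≤ ∑ j, ∑ k, l (Pi.single j 1) * S j k * l (Pi.single k 1) := by
    rw [hx]; positivity
  simp only [ContinuousLinearMap.comp_assoc] at e1 e2 ⊢
  simp_rw [e1, e2]
  rw [Real.coe_toNNReal _ hnn, hx]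
  congr 1
  push_cast
  simp only [mul_zero, zero_mul, one_pow, mul_one, Complex.ofReal_one, Complex.ofReal_zero]
  rw [← Finset.sum_div, ← Finset.sum_div, Finset.sum_neg_distrib, Finset.sum_neg_distrib]
  simp_rw [mul_pow]
  rw [← Finset.mul_sum]
  ring


lemma gphi_eq {φ : ℝ} (hφ : 0 < φ) (M : ℝ) :
    gphi φ M = φ * ∫ t in Set.Icc 0 (1/φ), (if M ≤ t then (1:ℝ) else 0) := by
  have h0 : 0 < 1 / φ := by positivity
  have e : (fun t : ℝ => if M ≤ t then (1:ℝ) else 0) = Set.indicator (Set.Ici M) (fun _ => 1) := by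
    funext t; simp [Set.indicator, Set.mem_Ici]
  rw [e, setIntegral_indicator measurableSet_Ici, setIntegral_const, smul_eq_mul, mul_one]
  have e2 : Set.Icc 0 (1/φ) ∩ Set.Ici M = Set.Icc (max 0 M) (1/φ) := by
    ext t; simp only [Set.mem_inter_iff, Set.mem_Icc, Set.mem_Ici, max_le_iff]; tauto
  rw [e2, Real.volume_real_Icc]
  unfold gphi
  split_ifs with h1 h2
  · rw [max_eq_left h1, sub_zero, max_eq_left h0.le]; field_simp
  · rw [max_eq_right (by linarith : 0 ≤ M), max_eq_left (by linarith)]; field_simp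
  · rw [max_eq_right (by linarith : 0 ≤ M), max_eq_right (by linarith)]; simp

/-- parameter set of levels at which the inflated rectangle is nonempty -/
def ISet {d : ℕ} (a b : Fin d → ℝ) (φ : ℝ) : Set ℝ := {t | t ∈ Set.Icc 0 (1/φ) ∧ ∀ j, a j - t ≤ b j + t}

lemma ISet_meas {d : ℕ} (a b : Fin d → ℝ) (φ : ℝ) : MeasurableSet (ISet a b φ) := by
  refine IsClosed.measurableSet ?_
  unfold ISet
  simp only [Set.setOf_and, Set.setOf_mem_eq, Set.setOf_forall]
  refine isClosed_Icc.inter (isClosed_iInter fun j => ?_)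
  exact isClosed_le (by fun_prop) (by fun_prop)

lemma mrect_eq {d : ℕ} (hd : 0 < d) (a b : Fin d → ℝ) {φ : ℝ} (hφ : 0 < φ) (w : Fin d → ℝ) :
    mrect d a b φ w = φ * ∫ t in ISet a b φ, (if ∀ j, a j - t ≤ w j ∧ w j ≤ b j + t then (1:ℝ) else 0) := by
  have : Nonempty (Fin d) := ⟨⟨0, hd⟩⟩
  unfold mrect
  rw [gphi_eq hφ]
  congr 1
  have e : ∀ t, ((⨆ j, max (w j - b j) (a j - w j)) ≤ t) = (∀ j, a j - t ≤ w j ∧ w j ≤ b j + t) := by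
    intro t
    rw [ciSup_le_iff (Set.finite_range _).bddAbove]
    simp only [max_le_iff, eq_iff_iff]
    refine forall_congr' fun j => ⟨fun h => ⟨by linarith [h.2], by linarith [h.1]⟩, fun h => ⟨by linarith [h.2], by linarith [h.1]⟩⟩
  simp_rw [e]
  refine (setIntegral_eq_of_subset_of_forall_diff_eq_zero measurableSet_Icc (fun t ht => ht.1) ?_)
  intro t ht
  rw [if_neg]
  intro h
  exact ht.2 ⟨ht.1, fun j => (h j).1.trans (h j).2⟩

/-- one coordinate factor -/
noncomputable def UU (a b s t x : ℝ) : ℝ := PhiN ((b + t - x) / s) + PhiN ((x - a + t) / s) - 1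

lemma rho_formula {d m : ℕ} (hd : 0 < d) (a b : Fin d → ℝ) {φ ε σs : ℝ} (hφ : 0 < φ) (hε : 0 < ε) (hσ : 0 < σs)
    (V : Fin m → Fin d → ℝ) (γ : Measure (Fin d → ℝ))
    (hγ : γ = ((Measure.pi fun _ : Fin m => gaussianReal 0 1).prod
      (Measure.pi fun _ : Fin d => gaussianReal 0 1)).map (fun p => (∑ i, p.1 i • V i) + σs • p.2)) (w : Fin d → ℝ) :
    rhoFn d a b φ ε γ w = φ * ∫ p, ∏ j, UU (a j) (b j) (ε * σs) p.2 (w j + ε * ∑ i, p.1 i * V i j)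
      ∂((Measure.pi fun _ : Fin m => gaussianReal 0 1).prod (volume.restrict (ISet a b φ))) := by
  set νm := (Measure.pi fun _ : Fin m => gaussianReal 0 1) with hνm
  set νd := (Measure.pi fun _ : Fin d => gaussianReal 0 1) with hνd
  set τ := volume.restrict (ISet a b φ) with hτ
  have hs : 0 < ε * σs := by positivity
  have hfin : IsFiniteMeasure τ := by
    refine ⟨?_⟩
    rw [hτ, Measure.restrict_apply_univ]
    refine (measure_mono (fun t ht => ht.1 : ISet a b φ ⊆ Set.Icc 0 (1/φ))).trans_lt ?_
    simp
  let C : Set ((Fin m → ℝ) × (Fin d → ℝ) × ℝ) := {p | ∀ j, a j - p.2.2 ≤ w j + ε * (∑ i, p.1 i * V i j + σs * p.2.1 j) ∧ w j + ε * (∑ i, p.1 i * V i j + σs * p.2.1 j) ≤ b j + p.2.2}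
  have hC : MeasurableSet C := by
    refine IsClosed.measurableSet ?_
    simp only [C, Set.setOf_forall, Set.setOf_and]
    refine isClosed_iInter fun j => IsClosed.inter ?_ ?_
    · exact isClosed_le (by fun_prop) (by fun_prop)
    · exact isClosed_le (by fun_prop) (by fun_prop)
  let g : (Fin m → ℝ) → (Fin d → ℝ) → ℝ → ℝ := fun u z t => C.indicator (fun _ => (1:ℝ)) (u, z, t)
  have hgm : StronglyMeasurable (fun p : (Fin m → ℝ) × (Fin d → ℝ) × ℝ => g p.1 p.2.1 p.2.2) :=
    (stronglyMeasurable_const.indicator hC)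
  have hgb : ∀ u z t, ‖g u z t‖ ≤ 1 := by
    intro u z t
    simp only [g]
    refine (norm_indicator_le_norm_self _ _).trans ?_
    simp
  have e1 : ∀ u z, mrect d a b φ (w + ε • ((∑ i, u i • V i) + σs • z)) = φ * ∫ t, g u z t ∂τ := by
    intro u z
    rw [mrect_eq hd a b hφ]
    congr 1
    refine integral_congr_ae (Filter.Eventually.of_forall fun t => ?_)
    simp only [g, Set.indicator, C, Set.mem_setOf_eq, Pi.add_apply, Pi.smul_apply, smul_eq_mul, Finset.sum_apply]
  have hmm : StronglyMeasurable (fun p : (Fin m → ℝ) × (Fin d → ℝ) => φ * ∫ t, g p.1 p.2 t ∂τ) := by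
    refine StronglyMeasurable.const_mul ?_ _
    refine StronglyMeasurable.integral_prod_right (f := fun (p : (Fin m → ℝ) × (Fin d → ℝ)) t => g p.1 p.2 t) ?_
    exact hgm.comp_measurable (g := fun p : ((Fin m → ℝ) × (Fin d → ℝ)) × ℝ => (p.1.1, p.1.2, p.2)) (by fun_prop)
  have hT : Measurable (fun p : (Fin m → ℝ) × (Fin d → ℝ) => (∑ i, p.1 i • V i) + σs • p.2) := by fun_prop
  -- measurability of mrect itself
  have hmr : StronglyMeasurable (fun z : Fin d → ℝ => mrect d a b φ (w + ε • z)) := by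
    have : (fun z : Fin d → ℝ => mrect d a b φ (w + ε • z)) = fun z => φ * ∫ t, (if ∀ j, a j - t ≤ w j + ε * z j ∧ w j + ε * z j ≤ b j + t then (1:ℝ) else 0) ∂τ := by
      funext z; rw [mrect_eq hd a b hφ]; rfl
    rw [this]
    refine StronglyMeasurable.const_mul ?_ _
    refine StronglyMeasurable.integral_prod_right (f := fun (z : Fin d → ℝ) t => (if ∀ j, a j - t ≤ w j + ε * z j ∧ w j + ε * z j ≤ b j + t then (1:ℝ) else 0)) ?_
    have hD : MeasurableSet {p : (Fin d → ℝ) × ℝ | ∀ j, a j - p.2 ≤ w j + ε * p.1 j ∧ w j + ε * p.1 j ≤ b j + p.2} := by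
      refine IsClosed.measurableSet ?_
      simp only [Set.setOf_forall, Set.setOf_and]
      refine isClosed_iInter fun j => IsClosed.inter ?_ ?_
      · exact isClosed_le (by fun_prop) (by fun_prop)
      · exact isClosed_le (by fun_prop) (by fun_prop)
    exact stronglyMeasurable_const.ite hD stronglyMeasurable_const
  have hmb : ∀ u z, ‖φ * ∫ t, g u z t ∂τ‖ ≤ φ * τ.real Set.univ := by
    intro u z
    rw [norm_mul, Real.norm_of_nonneg hφ.le]
    gcongr
    refine (norm_integral_le_of_norm_le_const (Filter.Eventually.of_forall fun t => hgb u z t)).trans ?_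
    simp
  unfold rhoFn
  rw [hγ, integral_map hT.aemeasurable hmr.aestronglyMeasurable]
  simp_rw [e1]
  rw [integral_prod _ (Integrable.of_bound hmm.aestronglyMeasurable (φ * τ.real Set.univ) (Filter.Eventually.of_forall fun p => hmb p.1 p.2))]
  simp only
  have e2 : ∀ u, ∫ z, φ * ∫ t, g u z t ∂τ ∂νd = φ * ∫ t, ∏ j, UU (a j) (b j) (ε * σs) t (w j + ε * ∑ i, u i * V i j) ∂τ := by
    intro u
    rw [integral_const_mul]
    congr 1
    rw [integral_integral_swap]
    · have hae : ∀ᵐ t ∂τ, t ∈ ISet a b φ := ae_restrict_mem (ISet_meas a b φ)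
      refine integral_congr_ae ?_
      filter_upwards [hae] with t ht
      have e3 : (fun z => g u z t) = Set.indicator (Set.pi Set.univ fun j => Set.Icc ((a j - t - (w j + ε * ∑ i, u i * V i j)) / (ε * σs)) ((b j + t - (w j + ε * ∑ i, u i * V i j)) / (ε * σs))) (fun _ => (1:ℝ)) := by
        funext z
        simp only [g, Set.indicator, C, Set.mem_setOf_eq, Set.mem_pi, Set.mem_univ, true_imp_iff, Set.mem_Icc]
        congr 1
        rw [eq_iff_iff]
        refine forall_congr' fun j => and_congr ?_ ?_
        · rw [div_le_iff₀ hs]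
          constructor <;> intro h <;> linarith
        · rw [le_div_iff₀ hs]
          constructor <;> intro h <;> linarith
      rw [e3, integral_indicator (MeasurableSet.univ_pi fun j => measurableSet_Icc), setIntegral_const, smul_eq_mul, mul_one,
        measureReal_def, hνd, Measure.pi_pi, ENNReal.toReal_prod]
      refine Finset.prod_congr rfl fun j _ => ?_
      have := gauss_Icc ((a j - t - (w j + ε * ∑ i, u i * V i j)) / (ε * σs)) ((b j + t - (w j + ε * ∑ i, u i * V i j)) / (ε * σs))
        (by gcongr; linarith [ht.2 j])
      rw [← measureReal_def, this]
      unfold UU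
      congr 3
      ring
    · refine Integrable.of_bound (C := 1) ?_ (Filter.Eventually.of_forall fun p => hgb u p.1 p.2)
      exact (hgm.comp_measurable (g := fun p : (Fin d → ℝ) × ℝ => (u, p.1, p.2)) (by fun_prop)).aestronglyMeasurable
  simp_rw [e2]
  rw [integral_const_mul]
  congr 1
  have hUb : ∀ a b s t x, ‖UU a b s t x‖ ≤ 1 := by
    intro a b s t x
    unfold UU
    rw [Real.norm_eq_abs, abs_le]
    constructor <;> linarith [PhiN_nonneg ((b + t - x) / s), PhiN_nonneg ((x - a + t) / s), PhiN_le_one ((b + t - x) / s), PhiN_le_one ((x - a + t) / s)]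
  have hUc : Continuous (fun p : (Fin m → ℝ) × ℝ => ∏ j, UU (a j) (b j) (ε * σs) p.2 (w j + ε * ∑ i, p.1 i * V i j)) := by
    have := PhiN_contDiff.continuous
    unfold UU
    fun_prop
  rw [integral_prod]
  refine Integrable.of_bound (C := 1) hUc.aestronglyMeasurable (Filter.Eventually.of_forall fun p => ?_)
  rw [norm_prod]
  exact Finset.prod_le_one (fun _ _ => norm_nonneg _) fun _ _ => hUb _ _ _ _ _


/-- normalised coordinate factor -/
noncomputable def WW (e₁ e₂ r x : ℝ) : ℝ := PhiN (e₁ - r * x) + PhiN (e₂ + r * x) - 1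

lemma iter_affine {f : ℝ → ℝ} (hf : ContDiff ℝ (⊤ : ℕ∞) f) (n : ℕ) (c e x : ℝ) :
    iteratedDeriv n (fun x => f (e + c * x)) x = c^n * iteratedDeriv n f (e + c * x) := by
  have h1 : ContDiff ℝ n (fun y => f (e + y)) := (hf.of_le (by exact_mod_cast le_top)).comp (by fun_prop)
  have h2 := congrFun (iteratedDeriv_comp_const_mul h1 c) x
  rw [h2, iteratedDeriv_comp_const_add]

lemma WW_contDiff (e₁ e₂ r : ℝ) : ContDiff ℝ (⊤ : ℕ∞) (WW e₁ e₂ r) := by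
  have := PhiN_contDiff
  unfold WW
  refine ContDiff.sub (ContDiff.add (this.comp (by fun_prop)) (this.comp (by fun_prop))) contDiff_const

lemma WW_iter (e₁ e₂ : ℝ) {r : ℝ} (hr : 0 ≤ r) (n : ℕ) (x : ℝ) :
    |iteratedDeriv (n+1) (WW e₁ e₂ r) x| ≤ r^(n+1) * (|iteratedDeriv (n+1) PhiN (e₁ - r * x)| + |iteratedDeriv (n+1) PhiN (e₂ + r * x)|) := by
  have h1 : ContDiff ℝ (n+1 : ℕ) (fun x => PhiN (e₁ + (-r) * x)) := (PhiN_contDiff.of_le (by exact_mod_cast le_top)).comp (by fun_prop)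
  have h2 : ContDiff ℝ (n+1 : ℕ) (fun x => PhiN (e₂ + r * x)) := (PhiN_contDiff.of_le (by exact_mod_cast le_top)).comp (by fun_prop)
  have e : WW e₁ e₂ r = fun x => (((fun x => PhiN (e₁ + (-r) * x)) + (fun x => PhiN (e₂ + r * x))) x) - 1 := by
    funext x
    simp only [WW, Pi.add_apply]
    congr 3
    ring
  have e3 : iteratedDeriv (n+1) (WW e₁ e₂ r) x = (-r)^(n+1) * iteratedDeriv (n+1) PhiN (e₁ + (-r) * x) + r^(n+1) * iteratedDeriv (n+1) PhiN (e₂ + r * x) := by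
    rw [e]
    have : iteratedDeriv (n+1) (fun x => (((fun x => PhiN (e₁ + (-r) * x)) + (fun x => PhiN (e₂ + r * x))) x) - 1) x
        = iteratedDeriv (n+1) ((fun x => PhiN (e₁ + (-r) * x)) + (fun x => PhiN (e₂ + r * x))) x := by
      rw [iteratedDeriv_succ', iteratedDeriv_succ']
      congr 1
      funext y
      rw [deriv_sub_const]
    rw [this, iteratedDeriv_add h1.contDiffAt h2.contDiffAt, iter_affine PhiN_contDiff, iter_affine PhiN_contDiff]
  rw [e3]
  refine (abs_add_le _ _).trans ?_
  rw [abs_mul, abs_mul, abs_pow, abs_pow, abs_neg, abs_of_nonneg hr, show e₁ + -r * x = e₁ - r * x by ring]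
  linarith

lemma PhiN_iter_bdd (n : ℕ) : ∃ D : ℝ, 0 ≤ D ∧ ∀ x, |iteratedDeriv (n+1) PhiN x| ≤ D := by
  obtain ⟨C, hC, h⟩ := PhiN_iter n
  refine ⟨C * (n.factorial * Real.exp 2), by positivity, fun x => (h x).trans ?_⟩
  rw [mul_assoc]
  refine mul_le_mul_of_nonneg_left ?_ hC
  refine le_trans ?_ (pow_exp_bound n x)
  gcongr
  nlinarith [sq_nonneg x]

lemma WW_abs_le_one (e₁ e₂ r x : ℝ) : |WW e₁ e₂ r x| ≤ 1 := by
  unfold WW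
  rw [abs_le]
  constructor <;> linarith [PhiN_nonneg (e₁ - r * x), PhiN_nonneg (e₂ + r * x), PhiN_le_one (e₁ - r * x), PhiN_le_one (e₂ + r * x)]

lemma WW_iter_bdd (n : ℕ) : ∃ D : ℝ, 0 ≤ D ∧ ∀ e₁ e₂ r x : ℝ, 0 ≤ r → |iteratedDeriv n (WW e₁ e₂ r) x| ≤ r^n * D := by
  cases n with
  | zero => exact ⟨1, zero_le_one, fun e₁ e₂ r x _ => by simpa using WW_abs_le_one e₁ e₂ r x⟩
  | succ n =>
    obtain ⟨D, hD, h⟩ := PhiN_iter_bdd n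
    refine ⟨2 * D, by positivity, fun e₁ e₂ r x hr => (WW_iter e₁ e₂ hr n x).trans ?_⟩
    refine mul_le_mul_of_nonneg_left ?_ (by positivity)
    linarith [h (e₁ - r * x), h (e₂ + r * x)]

lemma PhiN_pair {x y : ℝ} (h : 0 ≤ x + y) : 0 ≤ PhiN x + PhiN y - 1 := by
  have h1 := PhiN_neg x
  have h2 : PhiN (-x) ≤ PhiN y := PhiN_mono (by linarith)
  linarith

lemma sig_pair {x y : ℝ} (h : 0 ≤ x + y) : 0 ≤ Real.sigmoid x + Real.sigmoid y - 1 := by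
  have h1 := Real.sigmoid_neg x
  have h2 : Real.sigmoid (-x) ≤ Real.sigmoid y := Real.sigmoid_le (by linarith)
  linarith

lemma P_nonneg {K L α β : ℝ} (hK : 0 < K) (hL : 1 ≤ L) (h : 0 ≤ β + α) : 0 ≤ GG K L β + GG K L α - 1 := by
  have hq := q_lt hL
  have h0 : 0 < K / L := by positivity
  have h1 := PhiN_pair (x := β + K/L) (y := α + K/L) (by linarith)
  have h2 := sig_pair (x := L * β) (y := L * α) (by nlinarith)
  have h3 := Real.exp_pos (-L^2)
  have : GG K L β + GG K L α - 1 = (1 - Real.exp (-L^2)) * (PhiN (β + K/L) + PhiN (α + K/L) - 1) + Real.exp (-L^2) * (Real.sigmoid (L * β) + Real.sigmoid (L * α) - 1) := by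
    unfold GG; ring
  rw [this]
  exact add_nonneg (mul_nonneg (by linarith) h1) (mul_nonneg h3.le h2)

lemma W_zero {K L α β δ : ℝ} (hL : 1 ≤ L) (h : 0 ≤ β + α) (hδ : |δ| ≤ K / L) :
    |PhiN (β - δ) + PhiN (α + δ) - 1| ≤ (1 - Real.exp (-L^2))⁻¹ * (GG K L β + GG K L α - 1) := by
  have hq := q_lt hL
  rw [abs_le] at hδ
  have h1 := PhiN_pair (x := β - δ) (y := α + δ) (by linarith)
  rw [abs_of_nonneg h1, ← div_eq_inv_mul, le_div_iff₀ (by linarith)]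
  have h2 := sig_pair (x := L * β) (y := L * α) (by nlinarith)
  have h3 := Real.exp_pos (-L^2)
  have e : GG K L β + GG K L α - 1 = (PhiN (β + K/L) + PhiN (α + K/L) - 1) * (1 - Real.exp (-L^2)) + Real.exp (-L^2) * (Real.sigmoid (L * β) + Real.sigmoid (L * α) - 1) := by
    unfold GG; ring
  rw [e]
  have h4 : PhiN (β - δ) ≤ PhiN (β + K/L) := PhiN_mono (by linarith)
  have h5 : PhiN (α + δ) ≤ PhiN (α + K/L) := PhiN_mono (by linarith)
  have h6 : (PhiN (β - δ) + PhiN (α + δ) - 1) * (1 - Real.exp (-L^2)) ≤ (PhiN (β + K/L) + PhiN (α + K/L) - 1) * (1 - Real.exp (-L^2)) :=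
    mul_le_mul_of_nonneg_right (by linarith) (by linarith)
  have h7 := mul_nonneg h3.le h2
  linarith

lemma coord_bound {v : ℕ} {K κ L s α β δ e₁ e₂ x : ℝ} (hκ : 1 ≤ κ) (hK : 0 < K) (hL : 1 ≤ L) (hs : 0 < s)
    (hest : ∀ β, ∀ m < v, ∀ x, |x-β| ≤ K/L → |iteratedDeriv (m+1) PhiN x| ≤ κ*L^m*gg K L β)
    (h : 0 ≤ β + α) (hδ : |δ| ≤ K / L) (h1 : e₁ - s⁻¹ * x = β - δ) (h2 : e₂ + s⁻¹ * x = α + δ) (m : ℕ) (hm : m ≤ v) :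
    |iteratedDeriv m (WW e₁ e₂ s⁻¹) x| ≤ (1 - Real.exp (-L^2))⁻¹ * ((κ / s)^m *
      (if m = 0 then GG K L β + GG K L α - 1 else L^(m-1) * (gg K L β + gg K L α))) := by
  cases m with
  | zero =>
    simp only [iteratedDeriv_zero, pow_zero, one_mul, if_true]
    unfold WW
    rw [h1, h2]
    exact W_zero hL h hδ
  | succ n =>
    rw [if_neg (Nat.succ_ne_zero n), Nat.add_sub_cancel]
    refine (WW_iter e₁ e₂ (inv_nonneg.2 hs.le) n x).trans ?_
    have b1 := hest β n hm (e₁ - s⁻¹ * x) (by rw [h1]; simpa using hδ)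
    have b2 := hest α n hm (e₂ + s⁻¹ * x) (by rw [h2]; simpa using hδ)
    have hq := q_lt hL
    have hq0 := Real.exp_pos (-L^2)
    have hq1 : 1 ≤ (1 - Real.exp (-L^2))⁻¹ := (one_le_inv₀ (by linarith)).2 (by linarith)
    have hg : 0 ≤ L^n * (gg K L β + gg K L α) := mul_nonneg (by positivity) (add_nonneg (gg_nonneg hL _) (gg_nonneg hL _))
    calc s⁻¹^(n+1) * (|iteratedDeriv (n+1) PhiN (e₁ - s⁻¹ * x)| + |iteratedDeriv (n+1) PhiN (e₂ + s⁻¹ * x)|)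
        ≤ s⁻¹^(n+1) * (κ * (L^n * (gg K L β + gg K L α))) := by
          refine mul_le_mul_of_nonneg_left ?_ (by positivity)
          linarith
      _ ≤ s⁻¹^(n+1) * (κ^(n+1) * (L^n * (gg K L β + gg K L α))) := by
          gcongr
          exact le_self_pow₀ hκ (Nat.succ_ne_zero n)
      _ = 1 * ((κ / s)^(n+1) * (L^n * (gg K L β + gg K L α))) := by rw [div_pow, inv_pow]; field_simp
      _ ≤ _ := by
          refine mul_le_mul_of_nonneg_right hq1 ?_
          positivity

lemma pow_d_bound {d : ℕ} (hd : 3 ≤ d) : ((1 - Real.exp (-(√(Real.log d))^2))⁻¹)^d ≤ Real.exp 2 := by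
  have hd3 : (3:ℝ) ≤ d := by exact_mod_cast hd
  have hlog : 0 ≤ Real.log d := Real.log_nonneg (by linarith)
  rw [Real.sq_sqrt hlog, Real.exp_neg, Real.exp_log (by linarith)]
  have e : (1 - (d:ℝ)⁻¹)⁻¹ = 1 / (d - 1) + 1 := by
    have : (d:ℝ) - 1 ≠ 0 := by linarith
    have h2 : (d:ℝ) ≠ 0 := by linarith
    field_simp
    ring
  rw [e]
  have h1 : 1 / ((d:ℝ) - 1) + 1 ≤ Real.exp (1 / (d - 1)) := Real.add_one_le_exp _
  have h0 : 0 ≤ 1 / ((d:ℝ) - 1) + 1 := by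
    have : 0 < (d:ℝ) - 1 := by linarith
    positivity
  calc _ ≤ Real.exp (1 / (d - 1)) ^ d := pow_le_pow_left₀ h0 h1 d
    _ = Real.exp (d * (1 / (d - 1))) := by rw [← Real.exp_nat_mul]
    _ ≤ _ := by
      refine Real.exp_le_exp.2 ?_
      rw [mul_one_div, div_le_iff₀ (by linarith)]
      linarith


lemma tel_le {d : ℕ} {K L s κ : ℝ} (hκ : 1 ≤ κ) (hL : 1 ≤ L)
    (hest : ∀ β, gg K L β ≤ κ * L * (1 - GG K L β)) (A B : Fin d → ℝ) (t : ℝ) :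
    tel K L s A B t ≤ d * (2 * κ * L) := by
  unfold tel
  have hg : ∀ β, gg K L β ≤ κ * L := by
    intro β
    refine (hest β).trans (mul_le_of_le_one_right (by positivity) ?_)
    linarith [(GG_mem (K := K) hL β).1]
  calc _ ≤ ∑ j : Fin d, 2 * κ * L := by
        refine Finset.sum_le_sum fun j _ => ?_
        refine (mul_le_of_le_one_right (add_nonneg (gg_nonneg hL _) (gg_nonneg hL _)) ?_).trans ?_
        · refine Finset.prod_le_one (fun k _ => ?_) fun k _ => ?_
          · linarith [(GG_mem (K := K) hL (B k + t/s)).1, (GG_mem (K := K) hL (A k + t/s)).1]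
          · linarith [(GG_mem (K := K) hL (B k + t/s)).2, (GG_mem (K := K) hL (A k + t/s)).2]
        · linarith [hg (B j + t/s), hg (A j + t/s)]
    _ = _ := by simp

set_option maxHeartbeats 400000 in
lemma main_bound (n : ℕ) (K : ℝ) (hK : 0 < K) (κ : ℝ) (hκ : 1 ≤ κ)
    (hest : ∀ L : ℝ, 1 ≤ L → ∀ β : ℝ, gg K L β ≤ κ * L * (1 - GG K L β) ∧
      ∀ m < n+1, ∀ x : ℝ, |x - β| ≤ K / L → |iteratedDeriv (m+1) PhiN x| ≤ κ * L^m * gg K L β)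
    {d : ℕ} (hd : 0 < d) (L : ℝ) (hL : 1 ≤ L) {m : ℕ} (V : Fin m → Fin d → ℝ) (a b w : Fin d → ℝ) {φ ε σs : ℝ} (hφ : 0 < φ)
    (hε : 0 < ε) (hσ : 0 < σs) (γ : Measure (Fin d → ℝ))
    (hγ : γ = ((Measure.pi fun _ : Fin m => gaussianReal 0 1).prod
      (Measure.pi fun _ : Fin d => gaussianReal 0 1)).map (fun p => (∑ i, p.1 i • V i) + σs • p.2)) :
    ∑ J : Fin (n+1) → Fin d,
      (⨆ y : {y : Fin d → ℝ // ‖y‖ ≤ ε * σs * (K / L)},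
        |iteratedFDeriv ℝ (n+1) (rhoFn d a b φ ε γ) (w + y.1) (fun i => Pi.single (J i) 1)|)
    ≤ φ * (((1 - Real.exp (-L^2))⁻¹)^d * (κ / (ε * σs))^(n+1) * ((2 * κ * L)^n * ((n:ℝ)+1)^(n+1)) * (2 * (ε * σs))) := by
  classical
  set s := ε * σs with hs_def
  have hs : 0 < s := by positivity
  set νm := (Measure.pi fun _ : Fin m => gaussianReal 0 1) with hνm
  set τ := volume.restrict (ISet a b φ) with hτ
  have hsub : ISet a b φ ⊆ Set.Icc 0 (1/φ) := fun t ht => ht.1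
  have hfin : IsFiniteMeasure τ := by
    refine ⟨?_⟩
    rw [hτ, Measure.restrict_apply_univ]
    refine (measure_mono hsub).trans_lt ?_
    simp
  set μ := νm.prod τ with hμ
  let c : (Fin m → ℝ) → Fin d → ℝ := fun u j => ε * ∑ i, u i * V i j
  let e₁ : (Fin m → ℝ) × ℝ → Fin d → ℝ := fun p j => (b j + p.2 - c p.1 j) / s
  let e₂ : (Fin m → ℝ) × ℝ → Fin d → ℝ := fun p j => (c p.1 j - a j + p.2) / s
  let F : (Fin m → ℝ) × ℝ → (Fin d → ℝ) → ℝ := fun p x => ∏ j, WW (e₁ p j) (e₂ p j) s⁻¹ (x j)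
  let A : (Fin m → ℝ) → Fin d → ℝ := fun u j => (w j + c u j - a j) / s
  let B : (Fin m → ℝ) → Fin d → ℝ := fun u j => (b j - (w j + c u j)) / s
  have hrho : rhoFn d a b φ ε γ = fun x => φ * ∫ p, F p x ∂μ := by
    funext x
    rw [rho_formula hd a b hφ hε hσ V γ hγ x]
    congr 1
    refine integral_congr_ae (Filter.Eventually.of_forall fun p => ?_)
    simp only [F]
    refine Finset.prod_congr rfl fun j _ => ?_
    simp only [UU, WW, e₁, e₂, c]
    congr 3 <;> (field_simp; try ring)
  have hFc : ContDiff ℝ (⊤ : ℕ∞) (fun q : ((Fin m → ℝ) × ℝ) × (Fin d → ℝ) => F q.1 q.2) := by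
    have hP := PhiN_contDiff
    simp only [F, WW, e₁, e₂, c]
    refine contDiff_prod fun j _ => ContDiff.sub (ContDiff.add (hP.comp ?_) (hP.comp ?_)) contDiff_const <;> fun_prop
  have hFJ : ∀ k (J : Fin k → Fin d) p x, iteratedFDeriv ℝ k (F p) x (fun i => Pi.single (J i) 1)
      = ∏ j, iteratedDeriv (Finset.univ.filter (fun i => J i = j)).card (WW (e₁ p j) (e₂ p j) s⁻¹) (x j) :=
    fun k J p x => iter_prod (fun j => WW (e₁ p j) (e₂ p j) s⁻¹) (fun j => WW_contDiff _ _ _) k J x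
  choose D hD0 hD using WW_iter_bdd
  have hFJb : ∀ k (J : Fin k → Fin d) p x, |iteratedFDeriv ℝ k (F p) x (fun i => Pi.single (J i) 1)|
      ≤ ∏ j, (s⁻¹^((Finset.univ.filter (fun i => J i = j)).card) * D (Finset.univ.filter (fun i => J i = j)).card) := by
    intro k J p x
    rw [hFJ, Finset.abs_prod]
    exact Finset.prod_le_prod (fun _ _ => abs_nonneg _) fun j _ => hD _ _ _ _ _ (inv_nonneg.2 hs.le)
  have hFb : ∀ k, ∃ C, ∀ᵐ ω ∂μ, ∀ x, ‖iteratedFDeriv ℝ k (F ω) x‖ ≤ C := by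
    intro k
    refine ⟨∑ J : Fin k → Fin d, ∏ j, (s⁻¹^((Finset.univ.filter (fun i => J i = j)).card) * D (Finset.univ.filter (fun i => J i = j)).card),
      Filter.Eventually.of_forall fun p x => ?_⟩
    refine (norm_multilin_le _).trans ?_
    exact Finset.sum_le_sum fun J _ => hFJb k J p x
  have hcd : ∀ p, ContDiff ℝ (⊤ : ℕ∞) (F p) := by
    intro p
    refine contDiff_prod fun j _ => ?_
    exact (WW_contDiff (e₁ p j) (e₂ p j) s⁻¹).comp (contDiff_apply ℝ ℝ j)
  have hsmul : ∀ k p x, iteratedFDeriv ℝ k (fun x => φ * F p x) x = φ • iteratedFDeriv ℝ k (F p) x := fun k p x =>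
    iteratedFDeriv_const_smul_apply (a := φ) ((hcd p).of_le (by exact_mod_cast le_top)).contDiffAt
  have hiter := iter_integral μ (fun p x => φ * F p x) (contDiff_const.mul hFc) (fun k => by
    obtain ⟨C, hC⟩ := hFb k
    refine ⟨φ * C, hC.mono fun p hp x => ?_⟩
    rw [hsmul, norm_smul, Real.norm_of_nonneg hφ.le]
    exact mul_le_mul_of_nonneg_left (hp x) hφ.le) (n+1)
  have hcont : ∀ x, Continuous (fun p => iteratedFDeriv ℝ (n+1) (F p) x) := by
    intro x
    have := (contDiff_iter_param F hFc (n+1)).continuous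
    exact this.comp (f := fun p : (Fin m → ℝ) × ℝ => (p, x)) (by fun_prop)
  have hIntg : ∀ x, Integrable (fun p => iteratedFDeriv ℝ (n+1) (F p) x) μ := by
    intro x
    obtain ⟨C, hC⟩ := hFb (n+1)
    exact Integrable.of_bound (hcont x).aestronglyMeasurable C (hC.mono fun p hp => hp x)
  have hdiff : ∀ x (J : Fin (n+1) → Fin d), iteratedFDeriv ℝ (n+1) (rhoFn d a b φ ε γ) x (fun i => Pi.single (J i) 1)
      = φ * ∫ p, iteratedFDeriv ℝ (n+1) (F p) x (fun i => Pi.single (J i) 1) ∂μ := by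
    intro x J
    rw [hrho]
    simp_rw [← integral_const_mul]
    rw [hiter]
    simp_rw [hsmul]
    rw [integral_smul, ContinuousMultilinearMap.smul_apply, smul_eq_mul, integral_const_mul]
    congr 1
    exact ContinuousMultilinearMap.integral_apply (hIntg x) _
  -- pointwise bound
  let β : (Fin m → ℝ) × ℝ → Fin d → ℝ := fun p j => B p.1 j + p.2 / s
  let α : (Fin m → ℝ) × ℝ → Fin d → ℝ := fun p j => A p.1 j + p.2 / s
  let P : (Fin m → ℝ) × ℝ → Fin d → ℝ := fun p j => GG K L (β p j) + GG K L (α p j) - 1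
  let f : (Fin m → ℝ) × ℝ → Fin d → ℝ := fun p j => gg K L (β p j) + gg K L (α p j)
  let X : (Fin (n+1) → Fin d) → (Fin m → ℝ) × ℝ → ℝ := fun J p =>
    ∏ j, (if (Finset.univ.filter (fun i => J i = j)).card = 0 then P p j
        else L ^ ((Finset.univ.filter (fun i => J i = j)).card - 1) * f p j)
  let M : ℝ := ((1 - Real.exp (-L^2))⁻¹)^d * (κ / s)^(n+1)
  have hq := q_lt hL
  have hqi : 0 ≤ (1 - Real.exp (-L^2))⁻¹ := inv_nonneg.2 (by linarith)
  have hM : 0 ≤ M := by positivity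
  have hαβ : ∀ p : (Fin m → ℝ) × ℝ, p.2 ∈ ISet a b φ → ∀ j, 0 ≤ β p j + α p j := by
    intro p hp j
    have : β p j + α p j = (b j + p.2 - (a j - p.2)) / s := by
      simp only [β, α, A, B]; field_simp; ring
    rw [this]
    exact div_nonneg (by linarith [hp.2 j]) hs.le
  have hP0 : ∀ p : (Fin m → ℝ) × ℝ, p.2 ∈ ISet a b φ → ∀ j, 0 ≤ P p j := fun p hp j => P_nonneg hK hL (hαβ p hp j)
  have hf0 : ∀ p j, 0 ≤ f p j := fun p j => add_nonneg (gg_nonneg hL _) (gg_nonneg hL _)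
  have hP1 : ∀ p j, P p j ≤ 1 := fun p j => by
    simp only [P]; linarith [(GG_mem (K := K) hL (β p j)).2, (GG_mem (K := K) hL (α p j)).2]
  have hPm1 : ∀ p j, -1 ≤ P p j := fun p j => by
    simp only [P]; linarith [(GG_mem (K := K) hL (β p j)).1, (GG_mem (K := K) hL (α p j)).1]
  have hf : ∀ p j, f p j ≤ κ * L * (1 - P p j) := fun p j => by
    simp only [P, f]; linarith [(hest L hL (β p j)).1, (hest L hL (α p j)).1]
  have hpt : ∀ (J : Fin (n+1) → Fin d) (y : Fin d → ℝ), ‖y‖ ≤ s * (K / L) → ∀ p : (Fin m → ℝ) × ℝ, p.2 ∈ ISet a b φ →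
      ‖iteratedFDeriv ℝ (n+1) (F p) (w + y) (fun i => Pi.single (J i) 1)‖ ≤ M * X J p := by
    intro J y hy p hp
    rw [hFJ, norm_prod]
    have hcardle : ∀ j, (Finset.univ.filter (fun i => J i = j)).card ≤ n + 1 := by
      intro j
      simpa using Finset.card_le_univ (Finset.univ.filter (fun i => J i = j))
    have hsum : ∑ j, (Finset.univ.filter (fun i => J i = j)).card = n + 1 := by
      have := Finset.card_eq_sum_card_fiberwise (f := J) (s := Finset.univ) (t := Finset.univ) (fun _ _ => Finset.mem_coe.2 (Finset.mem_univ _))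
      rw [Finset.card_univ, Fintype.card_fin] at this
      exact this.symm
    have hy' : ∀ j, |y j / s| ≤ K / L := by
      intro j
      rw [abs_div, abs_of_pos hs, div_le_iff₀ hs, mul_comm]
      exact (norm_le_pi_norm y j).trans hy
    calc _ ≤ ∏ j, ((1 - Real.exp (-L^2))⁻¹ * ((κ / s)^((Finset.univ.filter (fun i => J i = j)).card) *
            (if (Finset.univ.filter (fun i => J i = j)).card = 0 then P p j
              else L ^ ((Finset.univ.filter (fun i => J i = j)).card - 1) * f p j))) := by
          refine Finset.prod_le_prod (fun _ _ => norm_nonneg _) fun j _ => ?_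
          refine coord_bound (δ := y j / s) hκ hK hL hs (fun β => (hest L hL β).2) (hαβ p hp j) (hy' j) ?_ ?_ _ (hcardle j)
          · simp only [e₁, β, B, Pi.add_apply]; field_simp; ring
          · simp only [e₂, α, A, Pi.add_apply]; field_simp; ring
      _ = M * X J p := by
          rw [Finset.prod_mul_distrib, Finset.prod_mul_distrib, Finset.prod_pow_eq_pow_sum, hsum, Finset.prod_const,
            Finset.card_univ, Fintype.card_fin]
          simp only [M, X]; ring
  have hae : ∀ᵐ p ∂μ, p.2 ∈ ISet a b φ := by
    have : ∀ᵐ t ∂τ, t ∈ ISet a b φ := ae_restrict_mem (ISet_meas a b φ)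
    exact Measure.quasiMeasurePreserving_snd.ae this
  have hcc : Continuous (fun p : (Fin m → ℝ) × ℝ => p.1) := continuous_fst
  have hβc : ∀ j, Continuous (fun p => β p j) := by
    intro j; simp only [β, B, c]; fun_prop
  have hαc : ∀ j, Continuous (fun p => α p j) := by
    intro j; simp only [α, A, c]; fun_prop
  have hPc : ∀ j, Continuous (fun p => P p j) := fun j =>
    (((GG_cont K L).comp (hβc j)).add ((GG_cont K L).comp (hαc j))).sub continuous_const
  have hfc : ∀ j, Continuous (fun p => f p j) := fun j =>
    (((gg_cont K L).comp (hβc j)).add ((gg_cont K L).comp (hαc j)))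
  have hXc : ∀ J, Continuous (X J) := by
    intro J
    refine continuous_finset_prod _ fun j _ => ?_
    split_ifs
    · exact hPc j
    · exact continuous_const.mul (hfc j)
  have hXi : ∀ J, Integrable (X J) μ := by
    intro J
    refine Integrable.of_bound (hXc J).aestronglyMeasurable
      (∏ j, (1 + L ^ ((Finset.univ.filter (fun i => J i = j)).card - 1) * (κ * L * 2))) (Filter.Eventually.of_forall fun p => ?_)
    simp only [X]
    rw [norm_prod]
    refine Finset.prod_le_prod (fun _ _ => norm_nonneg _) fun j _ => ?_
    have hL0 : 0 < L := by linarith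
    have hκ0 : 0 < κ := by linarith
    split_ifs
    · have h1 : ‖P p j‖ ≤ 1 := abs_le.2 ⟨hPm1 p j, hP1 p j⟩
      have h2 : 0 ≤ L ^ ((Finset.univ.filter (fun i => J i = j)).card - 1) * (κ * L * 2) := by positivity
      linarith
    · rw [Real.norm_of_nonneg (mul_nonneg (by positivity) (hf0 p j))]
      have h1 : f p j ≤ κ * L * 2 := (hf p j).trans (mul_le_mul_of_nonneg_left (by linarith [hPm1 p j]) (by positivity))
      have h2 := mul_le_mul_of_nonneg_left h1 (by positivity : 0 ≤ L ^ ((Finset.univ.filter (fun i => J i = j)).card - 1))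
      linarith
  have hX0 : ∀ J, 0 ≤ ∫ p, X J p ∂μ := by
    intro J
    refine integral_nonneg_of_ae (hae.mono fun p hp => ?_)
    refine Finset.prod_nonneg fun j _ => ?_
    split_ifs
    · exact hP0 p hp j
    · exact mul_nonneg (by positivity) (hf0 p j)
  have hJ : ∀ J : Fin (n+1) → Fin d, (⨆ y : {y : Fin d → ℝ // ‖y‖ ≤ s * (K / L)},
        |iteratedFDeriv ℝ (n+1) (rhoFn d a b φ ε γ) (w + y.1) (fun i => Pi.single (J i) 1)|) ≤ φ * (M * ∫ p, X J p ∂μ) := by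
    intro J
    refine Real.iSup_le (fun y => ?_) (mul_nonneg hφ.le (mul_nonneg hM (hX0 J)))
    rw [hdiff, abs_mul, abs_of_pos hφ]
    refine mul_le_mul_of_nonneg_left ?_ hφ.le
    rw [← integral_const_mul, ← Real.norm_eq_abs]
    exact norm_integral_le_of_norm_le ((hXi J).const_mul M) (hae.mono fun p hp => hpt J y.1 y.2 p hp)
  refine (Finset.sum_le_sum fun J _ => hJ J).trans ?_
  rw [← Finset.mul_sum, ← Finset.mul_sum, ← integral_finsetSum _ fun J _ => hXi J]
  refine mul_le_mul_of_nonneg_left ?_ hφ.le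
  refine le_trans (b := M * (((2 * κ * L)^n * ((n:ℝ)+1)^(n+1)) * (2 * s))) ?_ (le_of_eq (by simp only [M]; ring))
  refine mul_le_mul_of_nonneg_left ?_ hM
  set Q : ℝ := (2 * κ * L)^n * ((n:ℝ)+1)^(n+1) with hQ
  have hQ0 : 0 ≤ Q := by positivity
  have htc : Continuous (fun p : (Fin m → ℝ) × ℝ => tel K L s (A p.1) (B p.1) p.2) := by
    have h1 : (fun p : (Fin m → ℝ) × ℝ => tel K L s (A p.1) (B p.1) p.2) = fun p => ∑ j, f p j * ∏ k ∈ Finset.univ.erase j, ((1 + P p k) / 2) := rfl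
    rw [h1]
    fun_prop
  have hti : Integrable (fun p : (Fin m → ℝ) × ℝ => tel K L s (A p.1) (B p.1) p.2) μ := by
    refine Integrable.of_bound htc.aestronglyMeasurable (d * (2 * κ * L)) (Filter.Eventually.of_forall fun p => ?_)
    rw [Real.norm_of_nonneg (tel_nonneg hL _ _ _)]
    exact tel_le hκ hL (fun β => (hest L hL β).1) _ _ _
  calc ∫ p, ∑ J, X J p ∂μ ≤ ∫ p, Q * tel K L s (A p.1) (B p.1) p.2 ∂μ := by
        refine integral_mono_ae (integrable_finsetSum _ fun J _ => hXi J) (hti.const_mul Q) (hae.mono fun p hp => ?_)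
        have := comb (n := n) (P p) (f p) κ L hκ hL (hP0 p hp) (hP1 p) (hf0 p) (hf p)
        rw [← mul_assoc] at this
        exact this
    _ = Q * ∫ u, ∫ t, tel K L s (A u) (B u) t ∂τ ∂νm := by
        rw [integral_const_mul, hμ, integral_prod _ hti]
    _ ≤ Q * ∫ u, 2 * s ∂νm := by
        refine mul_le_mul_of_nonneg_left ?_ hQ0
        refine integral_mono hti.integral_prod_left (integrable_const _) fun u => ?_
        have h0 : (0:ℝ) ≤ 1 / φ := by positivity
        have hci : IntegrableOn (tel K L s (A u) (B u)) (Set.Icc 0 (1/φ)) := (tel_cont K L s (A u) (B u)).continuousOn.integrableOn_compact isCompact_Icc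
        calc ∫ t, tel K L s (A u) (B u) t ∂τ ≤ ∫ t in Set.Icc 0 (1/φ), tel K L s (A u) (B u) t := by
              exact setIntegral_mono_set hci (Filter.Eventually.of_forall fun t => tel_nonneg hL _ _ _) (Filter.Eventually.of_forall hsub)
          _ = ∫ t in (0:ℝ)..(1/φ), tel K L s (A u) (B u) t := by
              rw [integral_Icc_eq_integral_Ioc, intervalIntegral.integral_of_le h0]
          _ ≤ 2 * s := tel_int hL hs _ _
    _ = Q * (2 * s) := by simp

/-- mixed smoothing inequality.  For every v ≥ 1 and K > 0 there is a
constant C = C(v,K) such that for all d ≥ 3, all Σ positive definite with unit diagonal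
and smallest eigenvalue σ_*², all φ > 0, ε ∈ (0,1], all rectangles A and all w,
Σ_{j_1…j_v} sup_{‖y‖_∞ ≤ εσ_*η} |∂_{j_1…j_v} ρ^{A,φ,ε,Σ}(w+y)|
  ≤ C φ (log d)^{(v−1)/2}/(εσ_*)^{v−1}, where η = K/√(log d). -/
theorem stmt14 (v : ℕ) (hv : 1 ≤ v) (K : ℝ) (hK : 0 < K) :
    ∃ C : ℝ, ∀ d : ℕ, 3 ≤ d →
      ∀ (S : Fin d → Fin d → ℝ), (∀ j, S j j = 1) →
      ∀ σs : ℝ, 0 < σs →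
      IsGLB {r : ℝ | ∃ x : Fin d → ℝ, (∑ j, (x j) ^ 2) = 1 ∧
        r = ∑ j, ∑ k, x j * S j k * x k} (σs ^ 2) →
      ∀ γ : Measure (Fin d → ℝ), IsProbabilityMeasure γ →
      (∀ l : (Fin d → ℝ) →ₗ[ℝ] ℝ, ∃ vr : NNReal, γ.map l = gaussianReal 0 vr) →
      (∀ j k, ∫ z, z j * z k ∂γ = S j k) →
      ∀ φ : ℝ, 0 < φ → ∀ ε : ℝ, 0 < ε → ε ≤ 1 →
      ∀ a b : Fin d → ℝ, ∀ w : Fin d → ℝ,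
        ∑ J : Fin v → Fin d,
          (⨆ y : {y : Fin d → ℝ // ‖y‖ ≤ ε * σs * (K / Real.sqrt (Real.log d))},
            |iteratedFDeriv ℝ v (rhoFn d a b φ ε γ) (w + y.1)
              (fun i => Pi.single (J i) 1)|)
          ≤ C * φ * Real.log d ^ (((v : ℝ) - 1) / 2) / (ε * σs) ^ (v - 1) := by
  obtain ⟨n, rfl⟩ : ∃ n, v = n + 1 := ⟨v - 1, by omega⟩
  obtain ⟨κ, hκ, hest⟩ := est_main (n+1) K hK
  refine ⟨Real.exp 2 * κ^(n+1) * (2 * κ)^n * ((n:ℝ)+1)^(n+1) * 2, ?_⟩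
  intro d hd S _ σs hσ hglb γ hγp hγ hS φ hφ ε hε _ a b w
  have hd3 : (3:ℝ) ≤ d := by exact_mod_cast hd
  have hlog : 1 ≤ Real.log d := by
    rw [Real.le_log_iff_exp_le (by linarith)]
    linarith [Real.exp_one_lt_d9]
  have hL : 1 ≤ √(Real.log d) := Real.one_le_sqrt.2 hlog
  obtain ⟨m, V, hV⟩ := decomp S σs (fun x hx => hglb.1 ⟨x, hx, rfl⟩) γ hγ hS
  have hmain := main_bound n K hK κ hκ hest (by omega : 0 < d) (√(Real.log d)) hL V a b w hφ hε hσ γ hV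
  refine hmain.trans ?_
  have hs : 0 < ε * σs := by positivity
  have hpow : Real.log d ^ ((((n + 1 : ℕ) : ℝ) - 1) / 2) = √(Real.log d)^n := by
    rw [Real.sqrt_eq_rpow, ← Real.rpow_natCast, ← Real.rpow_mul (by linarith)]
    congr 1
    push_cast
    ring
  rw [hpow, Nat.add_sub_cancel]
  have hb := pow_d_bound hd
  set L := √(Real.log d)
  set s := ε * σs
  have hL0 : 0 < L := by linarith
  have hκ0 : 0 < κ := by linarith
  calc φ * (((1 - Real.exp (-L^2))⁻¹)^d * (κ / s)^(n+1) * ((2 * κ * L)^n * ((n:ℝ)+1)^(n+1)) * (2 * s))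
      ≤ φ * (Real.exp 2 * (κ / s)^(n+1) * ((2 * κ * L)^n * ((n:ℝ)+1)^(n+1)) * (2 * s)) := by
        gcongr
    _ = _ := by
        rw [div_pow, mul_pow (2 * κ) L, pow_succ s n]
        field_simp
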